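/- arXiv:1811.00049 — 2 statements merged into one kernel-verified Lean document; each statement's English description precedes it below -/
import Mathlib

section
/- Let h be odd, let w be a divisor of q+1 with 3 | w, and let L̄ ≤ M_ℓ be a subgroup such that |L̄ ∩ Z| = w and the quotient L̄/(L̄ ∩ Z) is isomorphic to SL(2,2) (equivalently, to the symmetric group on 3 letters). Then the number N of orbits of L̄ acting on O equals (q+4)/6 + (q+1)/w + (q+1)(q²−q−2)/(6w). -/
/-!
The orbits are counted with Burnside's lemma. An element of `M_ℓ` is a block matrix `A ⊕ 1` with `A`
preserving the form `x x̄ - y ȳ`, where `x̄ = x ^ q`. It fixes an affine point `(x : y : 1)` of the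
curve exactly when `(x, y)` is a fixed vector of norm `1`, and a point `(t : 1 : 0)` exactly when
`(t, 1)` is an isotropic eigenvector.

* The `w` scalars fix all `q + 1` points at infinity, and only the identity fixes any of the
  `q³ - q` affine points.
* A nonscalar `A` with scalar square has trace `0`, hence in characteristic `2` a single eigenvalue.
  Its eigenvectors are isotropic, as an anisotropic one would split off an orthogonal eigenvector
  with the same eigenvalue. So each of the `3 w` elements over an involution fixes one point.
* A nonscalar `A` with scalar cube satisfies `(tr A)² = det A`, so its eigenvalues are `-ω tr A` for
  the primitive cube roots of unity `ω`; an isotropic eigenvector would force `ω̄ = ω`, which is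
  impossible since `ω ω̄ = 1`. Over a 3-cycle there is a commutator, of determinant and hence trace
  `1`; its multiple by a scalar `ε` has eigenvalue `1` exactly when `ε` has order `3`. So over each
  of the two 3-cycles exactly two elements fix an affine point, and they fix `q + 1` of them.

Altogether `6 w N = (q³ - q) + w (q + 1) + 3 w + 4 (q + 1)`.
-/

open Matrix

noncomputable def glAct {F : Type*} [Field F] (M : GL (Fin 3) F)
    (x : Projectivization F (Fin 3 → F)) : Projectivization F (Fin 3 → F) :=
  Projectivization.map
    ((LinearMap.GeneralLinearGroup.generalLinearEquiv F (Fin 3 → F)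
        (Matrix.GeneralLinearGroup.toLin M)).toLinearMap)
    ((LinearMap.GeneralLinearGroup.generalLinearEquiv F (Fin 3 → F)
        (Matrix.GeneralLinearGroup.toLin M)).injective) x

noncomputable def numOrbits {F : Type*} [Field F] (L : Subgroup (GL (Fin 3) F))
    (O : Set (Projectivization F (Fin 3 → F))) : ℕ :=
  Nat.card ((fun x => {y | ∃ g ∈ L, glAct g x = y}) '' O :
    Set (Set (Projectivization F (Fin 3 → F))))

def hermitianPts (q : ℕ) (F : Type*) [Field F] : Set (Projectivization F (Fin 3 → F)) :=
  {x | x.rep 1 ^ (q + 1) = x.rep 0 ^ (q + 1) - x.rep 2 ^ (q + 1)}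

def MlSet (q : ℕ) (F : Type*) [Field F] : Set (GL (Fin 3) F) :=
  {M | ∃ a c τ : F, a ^ (q + 1) - c ^ (q + 1) = 1 ∧ τ ^ (q + 1) = 1 ∧
    (M : Matrix (Fin 3) (Fin 3) F) = !![a, τ * c ^ q, 0; c, τ * a ^ q, 0; 0, 0, 1]}

def ZSet (q : ℕ) (F : Type*) [Field F] : Set (GL (Fin 3) F) :=
  {M | ∃ ε : F, ε ^ (q + 1) = 1 ∧ (M : Matrix (Fin 3) (Fin 3) F) = Matrix.diagonal ![ε, ε, 1]}

theorem range_powMonoidHom_eq_ker {C : Type*} [CommGroup C] [IsCyclic C] [Finite C] {m n : ℕ}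
    (hC : Nat.card C = m * n) :
    (powMonoidHom m : C →* C).range = (powMonoidHom n : C →* C).ker := by
  have hm : 0 < m := Nat.pos_of_mul_pos_right (hC ▸ Nat.card_pos)
  refine Subgroup.eq_of_le_of_card_ge ?_ ?_
  · rintro _ ⟨y, rfl⟩
    simp only [MonoidHom.mem_ker, powMonoidHom_apply, ← pow_mul, ← hC, pow_card_eq_one']
  · rw [IsCyclic.card_powMonoidHom_ker, IsCyclic.card_powMonoidHom_range, hC,
      Nat.gcd_mul_left_left, Nat.gcd_mul_right_left, Nat.mul_div_cancel_left _ hm]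

theorem ncard_setOf_pow_eq {C : Type*} [CommGroup C] [IsCyclic C] [Finite C] {m n : ℕ}
    (hC : Nat.card C = m * n) {k : C} (hk : k ^ n = 1) : {y : C | y ^ m = k}.ncard = m := by
  obtain ⟨y₀, rfl⟩ : k ∈ (powMonoidHom m : C →* C).range := by
    rwa [range_powMonoidHom_eq_ker hC]
  calc {y : C | y ^ m = powMonoidHom m y₀}.ncard
      = Nat.card (powMonoidHom m : C →* C).ker :=
        Nat.card_congr (MonoidHom.fiberEquivKer (powMonoidHom m : C →* C) y₀)
    _ = m := by rw [IsCyclic.card_powMonoidHom_ker, hC, Nat.gcd_mul_right_left]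

section NormFibers

variable {F : Type*} [Field F] [StarRing F] {q : ℕ}

theorem mul_star_self_eq_pow (hstar : ∀ x : F, star x = x ^ q) (x : F) :
    x * star x = x ^ (q + 1) := by
  rw [hstar, ← pow_succ']

variable [Finite F]

theorem ncard_setOf_mul_star_self_eq (hF : Nat.card F = q ^ 2) (hstar : ∀ x : F, star x = x ^ q)
    {k : F} (hk0 : k ≠ 0) (hk : star k = k) : {y : F | y * star y = k}.ncard = q + 1 := by
  have hq : 1 ≤ q := Nat.one_le_iff_ne_zero.mpr (by rintro rfl; exact Nat.card_pos.ne' hF)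
  have hunits : Nat.card Fˣ = (q + 1) * (q - 1) := by
    rw [Nat.card_units, hF, ← Nat.sq_sub_sq, one_pow]
  have hpow : Units.mk0 k hk0 ^ (q - 1) = 1 := by
    have hkq : Units.mk0 k hk0 ^ q = Units.mk0 k hk0 := Units.ext (by simpa [hstar] using hk)
    rwa [← Nat.sub_add_cancel hq, pow_succ, mul_eq_right] at hkq
  have himage : {y : F | y * star y = k} =
      Units.val '' {u : Fˣ | u ^ (q + 1) = Units.mk0 k hk0} := by
    ext y
    simp only [mul_star_self_eq_pow hstar, Set.mem_image, Set.mem_ofPred_eq, Units.ext_iff,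
      Units.val_pow_eq_pow_val, Units.val_mk0]
    constructor
    · intro hy
      have hy0 : y ≠ 0 := by rintro rfl; exact hk0 (by simpa using hy.symm)
      exact ⟨Units.mk0 y hy0, hy, rfl⟩
    · rintro ⟨u, hu, rfl⟩
      exact hu
  rw [himage, Set.ncard_image_of_injective _ Units.val_injective, ncard_setOf_pow_eq hunits hpow]

end NormFibers

section HermitianForm

variable {F : Type*} [Field F] [StarRing F]

/-- The Hermitian form of signature `(1, -1)` on `F²`. -/
def hermForm (v w : Fin 2 → F) : F := v 0 * star (w 0) - v 1 * star (w 1)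

theorem hermForm_smul_self (c : F) (v : Fin 2 → F) :
    hermForm (c • v) (c • v) = c * star c * hermForm v v := by
  simp only [hermForm, Pi.smul_apply, smul_eq_mul, star_mul']
  ring

theorem star_hermForm_self (v : Fin 2 → F) : star (hermForm v v) = hermForm v v := by
  rw [hermForm, star_sub, star_mul, star_mul, star_star, star_star]

variable (F) in
/-- The vectors of Hermitian norm `1`; they parametrise the affine points `(x : y : 1)` of the
Hermitian curve. -/
def unitVectors : Set (Fin 2 → F) := {v | hermForm v v = 1}

theorem ncard_unitVectors_eq_sum [Fintype F] :
    (unitVectors F).ncard = ∑ c : F, {x : F | x * star x = 1 + c * star c}.ncard := by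
  let e : unitVectors F ≃ Σ c : F, {x : F | x * star x = 1 + c * star c} :=
    { toFun v := ⟨v.1 1, v.1 0, eq_add_of_sub_eq v.2⟩
      invFun p := ⟨![p.2.1, p.1], sub_eq_of_eq_add p.2.2⟩
      left_inv v := Subtype.ext (funext (Fin.forall_fin_two.mpr ⟨rfl, rfl⟩))
      right_inv _ := rfl }
  rw [← Nat.card_coe_set_eq, Nat.card_congr e, Nat.card_sigma]
  simp only [Nat.card_coe_set_eq]

variable [Finite F] {q : ℕ}

theorem ncard_setOf_mul_star_self_eq_one_add [DecidableEq F] (hF : Nat.card F = q ^ 2)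
    (hstar : ∀ x : F, star x = x ^ q) (c : F) :
    {x : F | x * star x = 1 + c * star c}.ncard + (if c * star c = -1 then q else 0) = q + 1 := by
  split_ifs with hc
  · have hzero : {x : F | x * star x = 1 + c * star c} = {0} := by
      ext x
      simp [hc]
    rw [hzero, Set.ncard_singleton, add_comm]
  · refine ncard_setOf_mul_star_self_eq hF hstar (fun h => hc ?_) ?_
    · linear_combination h
    · rw [star_add, star_one, star_mul', star_star, mul_comm (star c)]

theorem ncard_unitVectors_add (hF : Nat.card F = q ^ 2) (hstar : ∀ x : F, star x = x ^ q) :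
    (unitVectors F).ncard + q = q ^ 3 := by
  classical
  have : Fintype F := Fintype.ofFinite F
  have hneg : (Finset.univ.filter fun c : F => c * star c = -1).card = q + 1 := by
    rw [← ncard_setOf_mul_star_self_eq hF hstar (k := (-1 : F)) (by simp) (by simp),
      ← Set.ncard_coe_finset, Finset.coe_filter_univ]
  have hsum : (unitVectors F).ncard + (q + 1) * q = q ^ 2 * (q + 1) :=
    calc (unitVectors F).ncard + (q + 1) * q
        = ∑ c : F, ({x : F | x * star x = 1 + c * star c}.ncard
            + if c * star c = -1 then q else 0) := by
          rw [Finset.sum_add_distrib, ncard_unitVectors_eq_sum, ← Finset.sum_filter,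
            Finset.sum_const, hneg, smul_eq_mul]
      _ = q ^ 2 * (q + 1) := by
          simp only [ncard_setOf_mul_star_self_eq_one_add hF hstar, Finset.sum_const,
            Finset.card_univ, ← Nat.card_eq_fintype_card, hF, smul_eq_mul]
  nlinarith only [hsum]

end HermitianForm

section TwoByTwo

theorem sq_eq_trace_smul_sub_det_smul_one {R : Type*} [CommRing R] (A : Matrix (Fin 2) (Fin 2) R) :
    A ^ 2 = A.trace • A - A.det • 1 := by
  cases subsingleton_or_nontrivial R
  · exact Subsingleton.elim _ _
  have hCH := aeval_self_charpoly A
  simp only [charpoly_fin_two, map_add, map_sub, map_mul, map_pow, Polynomial.aeval_X,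
    Polynomial.aeval_C, Algebra.algebraMap_eq_smul_one, smul_mul_assoc, one_mul] at hCH
  rw [← sub_eq_zero, ← hCH, sub_sub_eq_add_sub, add_sub_right_comm]

variable {F : Type*} [Field F] {A : Matrix (Fin 2) (Fin 2) F} {c : F}

/-- A matrix is scalar if it is a multiple of the identity; these are the blocks of the elements of
the centre `Z`. -/
def IsScalarMatrix (A : Matrix (Fin 2) (Fin 2) F) : Prop := ∃ c : F, A = c • 1

theorem IsScalarMatrix.eq_smul_one (hA : IsScalarMatrix A) :
    A = A 0 0 • 1 := by
  obtain ⟨c, rfl⟩ := hA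
  simp

theorem eq_zero_of_isScalarMatrix_smul_sub (hA : ¬ IsScalarMatrix A) {s r : F}
    (h : IsScalarMatrix (s • A - r • 1)) : s = 0 := by
  obtain ⟨c, hc⟩ := h
  by_contra hs
  exact hA ⟨s⁻¹ * (c + r), by rw [mul_smul, add_smul, ← hc, sub_add_cancel, inv_smul_smul₀ hs]⟩

theorem trace_eq_zero_of_isScalarMatrix_sq (hA : ¬ IsScalarMatrix A)
    (h : IsScalarMatrix (A ^ 2)) : A.trace = 0 :=
  eq_zero_of_isScalarMatrix_smul_sub hA (sq_eq_trace_smul_sub_det_smul_one A ▸ h)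

theorem trace_sq_eq_det_of_isScalarMatrix_cube (hA : ¬ IsScalarMatrix A)
    (h : IsScalarMatrix (A ^ 3)) : A.trace ^ 2 = A.det := by
  have hcube : A ^ 3 = (A.trace ^ 2 - A.det) • A - (A.trace * A.det) • 1 := by
    have hsq := sq_eq_trace_smul_sub_det_smul_one A
    rw [pow_succ, hsq, sub_mul, smul_mul_assoc, ← pow_two, hsq, smul_mul_assoc, one_mul]
    module
  exact sub_eq_zero.mp (eq_zero_of_isScalarMatrix_smul_sub hA (hcube ▸ h))

theorem exists_mulVec_eq_smul_iff :
    (∃ v ≠ 0, A *ᵥ v = c • v) ↔ c ^ 2 - A.trace * c + A.det = 0 := by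
  have hdet : (scalar (Fin 2) c - A).det = c ^ 2 - A.trace * c + A.det := by
    rw [← eval_charpoly, charpoly_fin_two]
    simp only [Polynomial.eval_add, Polynomial.eval_sub, Polynomial.eval_mul, Polynomial.eval_pow,
      Polynomial.eval_X, Polynomial.eval_C]
  rw [← hdet, ← exists_mulVec_eq_zero_iff]
  simp only [sub_mulVec, scalar_apply, ← smul_one_eq_diagonal, smul_mulVec, one_mulVec,
    sub_eq_zero, eq_comm (a := c • _)]

theorem mulVec_eq_smul_iff_fin_two {v : Fin 2 → F} :
    A *ᵥ v = c • v ↔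
      A 0 0 * v 0 + A 0 1 * v 1 = c * v 0 ∧ A 1 0 * v 0 + A 1 1 * v 1 = c * v 1 := by
  simp only [funext_iff, Fin.forall_fin_two, mulVec_fin_two, cons_val_zero, cons_val_one,
    Pi.smul_apply, smul_eq_mul]

theorem eq_smul_one_of_mulVec_eq_smul {v w : Fin 2 → F} (hvw : v 0 * w 1 - v 1 * w 0 ≠ 0)
    (hv : A *ᵥ v = c • v) (hw : A *ᵥ w = c • w) : A = c • 1 := by
  rw [mulVec_eq_smul_iff_fin_two] at hv hw
  have hP : IsUnit !![v 0, w 0; v 1, w 1] := by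
    rw [isUnit_iff_isUnit_det, det_fin_two_of, mul_comm (w 0)]
    exact hvw.isUnit
  refine hP.mul_right_cancel ?_
  rw [smul_mul_assoc, one_mul, eta_fin_two A, mul_fin_two, smul_of, smul_cons, smul_cons]
  simp only [hv, hw, smul_cons, smul_eq_mul, smul_empty]

end TwoByTwo

section PseudoUnitary

variable {F : Type*} [Field F] [StarRing F] {A : Matrix (Fin 2) (Fin 2) F} {c : F} {v : Fin 2 → F}

/-- A matrix is pseudo-unitary if it preserves the Hermitian form `hermForm`; the upper left blocks
of the elements of `M_ℓ` are of this kind. -/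
def IsPseudoUnitary (A : Matrix (Fin 2) (Fin 2) F) : Prop :=
  ∀ v w, hermForm (A *ᵥ v) (A *ᵥ w) = hermForm v w

namespace IsPseudoUnitary

theorem mul_star_self_eq_one_of_mulVec_eq_smul (hA : IsPseudoUnitary A) (hv : hermForm v v ≠ 0)
    (hc : A *ᵥ v = c • v) : c * star c = 1 := by
  rw [← mul_eq_right₀ hv, ← hermForm_smul_self, ← hc, hA v v]

theorem det_ne_zero (hA : IsPseudoUnitary A) : A.det ≠ 0 := by
  rw [ne_eq, ← exists_mulVec_eq_zero_iff]
  rintro ⟨v, hv0, hv⟩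
  have horth (w : Fin 2 → F) : hermForm v w = 0 := by
    rw [← hA v w, hv]
    simp [hermForm]
  refine hv0 (funext (Fin.forall_fin_two.mpr ⟨?_, ?_⟩))
  · simpa [hermForm] using horth ![1, 0]
  · simpa [hermForm] using horth ![0, 1]

theorem det_mul_star_trace (hA : IsPseudoUnitary A) : A.det * star A.trace = A.trace := by
  have h00 : A 0 0 * star (A 0 0) - A 1 0 * star (A 1 0) = 1 := by
    simpa [hermForm] using hA ![1, 0] ![1, 0]
  have h11 : A 0 1 * star (A 0 1) - A 1 1 * star (A 1 1) = -1 := by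
    simpa [hermForm] using hA ![0, 1] ![0, 1]
  have h01 : A 0 1 * star (A 0 0) - A 1 1 * star (A 1 0) = 0 := by
    simpa [hermForm] using hA ![0, 1] ![1, 0]
  have h10 : A 0 0 * star (A 0 1) - A 1 0 * star (A 1 1) = 0 := by
    simpa [hermForm] using hA ![1, 0] ![0, 1]
  rw [det_fin_two, trace_fin_two, star_add]
  linear_combination A 1 1 * h00 - A 1 0 * h01 - A 0 0 * h11 + A 0 1 * h10

theorem det_mul_star_of_isotropic (hA : IsPseudoUnitary A) {t : F} (ht : t * star t = 1)
    (hc : A *ᵥ ![t, 1] = c • ![t, 1]) : A.det * star c = c := by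
  have hpair : star c * (A 0 0 * star t - A 1 0) = star t := by
    have h := hA ![1, 0] ![t, 1]
    rw [hc] at h
    simp only [hermForm, mulVec_fin_two, cons_val_zero, cons_val_one, mul_one, mul_zero, add_zero,
      Pi.smul_apply, smul_eq_mul, star_mul', one_mul, star_one, sub_zero] at h
    linear_combination h
  obtain ⟨h0, h1⟩ : A 0 0 * t + A 0 1 = c * t ∧ A 1 0 * t + A 1 1 = c := by
    simpa using mulVec_eq_smul_iff_fin_two.mp hc
  rw [det_fin_two, eq_sub_of_add_eq' h0, eq_sub_of_add_eq' h1]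
  linear_combination c * t * hpair + (c - A 0 0 * c * star c) * ht

theorem hermForm_mulVec_orthogonal (hA : IsPseudoUnitary A) (hv : hermForm v v ≠ 0)
    (hc : A *ᵥ v = c • v) {u : Fin 2 → F} (hu : hermForm u v = 0) :
    hermForm (A *ᵥ u) v = 0 := by
  have hcc := hA.mul_star_self_eq_one_of_mulVec_eq_smul hv hc
  have h := hA u v
  rw [hc, hu] at h
  simp only [hermForm, Pi.smul_apply, smul_eq_mul, star_mul'] at h ⊢
  linear_combination c * h - (A *ᵥ u) 0 * star (v 0) * hcc + (A *ᵥ u) 1 * star (v 1) * hcc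

theorem mulVec_orthogonal (hA : IsPseudoUnitary A) (hv : hermForm v v ≠ 0)
    (hc : A *ᵥ v = c • v) :
    A *ᵥ ![star (v 1), star (v 0)] = (A.trace - c) • ![star (v 1), star (v 0)] := by
  have horth := hA.hermForm_mulVec_orthogonal hv hc (u := ![star (v 1), star (v 0)])
    (by simp [hermForm, mul_comm])
  obtain ⟨h0, h1⟩ := mulVec_eq_smul_iff_fin_two.mp hc
  simp only [hermForm, mulVec_fin_two, cons_val_zero, cons_val_one] at horth
  have hv' : v 0 * star (v 0) - v 1 * star (v 1) ≠ 0 := hv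
  rw [mulVec_eq_smul_iff_fin_two, trace_fin_two]
  simp only [cons_val_zero, cons_val_one]
  constructor <;> refine mul_right_cancel₀ hv' ?_
  · linear_combination star (v 1) * star (v 1) * h1 - star (v 0) * star (v 1) * h0 + v 0 * horth
  · linear_combination star (v 0) * star (v 1) * h1 - star (v 0) * star (v 0) * h0 + v 1 * horth

theorem isScalarMatrix_of_trace_eq_two_mul (hA : IsPseudoUnitary A) (hv : hermForm v v ≠ 0)
    (hc : A *ᵥ v = c • v) (htr : A.trace = 2 * c) : IsScalarMatrix A := by
  refine ⟨c, eq_smul_one_of_mulVec_eq_smul (w := ![star (v 1), star (v 0)]) hv hc ?_⟩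
  rw [hA.mulVec_orthogonal hv hc, htr, two_mul, add_sub_cancel_right]

end IsPseudoUnitary

end PseudoUnitary

section FixedPoints

variable {F : Type*} [Field F] [StarRing F] {A : Matrix (Fin 2) (Fin 2) F} {c : F} {v : Fin 2 → F}

/-- The vectors `(x, y)` for which `(x : y : 1)` is a point of the Hermitian curve fixed by the
block matrix `A ⊕ 1`. -/
def fixedUnitVectors (A : Matrix (Fin 2) (Fin 2) F) : Set (Fin 2 → F) :=
  {v ∈ unitVectors F | A *ᵥ v = v}

/-- The scalars `t` for which `(t : 1 : 0)` is a point of the Hermitian curve fixed by the block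
matrix `A ⊕ 1`. -/
def fixedIsotropicSlopes (A : Matrix (Fin 2) (Fin 2) F) : Set F :=
  {t | t * star t = 1 ∧ ∃ c : F, A *ᵥ ![t, 1] = c • ![t, 1]}

/-- The number of points of the Hermitian curve fixed by the block matrix `A ⊕ 1`. -/
noncomputable def fixCount (A : Matrix (Fin 2) (Fin 2) F) : ℕ :=
  (fixedUnitVectors A).ncard + (fixedIsotropicSlopes A).ncard

theorem ne_zero_of_mem_unitVectors (hv : v ∈ unitVectors F) : v ≠ 0 := by
  rintro rfl
  simp [unitVectors, hermForm] at hv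

theorem fixCount_smul_one [Finite F] [DecidableEq F] {q : ℕ} (hF : Nat.card F = q ^ 2)
    (hstar : ∀ x : F, star x = x ^ q) (c : F) :
    fixCount (c • (1 : Matrix (Fin 2) (Fin 2) F)) =
      (if c = 1 then (unitVectors F).ncard else 0) + (q + 1) := by
  have hslopes : fixedIsotropicSlopes (c • (1 : Matrix (Fin 2) (Fin 2) F)) =
      {t : F | t * star t = 1} := by
    ext t
    simp only [fixedIsotropicSlopes, smul_mulVec, one_mulVec, Set.mem_ofPred_eq,
      and_iff_left_iff_imp]
    exact fun _ => ⟨c, rfl⟩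
  rw [fixCount, hslopes, ncard_setOf_mul_star_self_eq hF hstar one_ne_zero (star_one F)]
  congr 1
  split_ifs with hc
  · simp only [fixedUnitVectors, hc, one_smul, one_mulVec, and_true, Set.ofPred_mem_eq]
  · refine (Set.ncard_eq_zero).mpr (Set.eq_empty_of_forall_notMem fun v hv => hc ?_)
    have hmul := hv.2
    rw [smul_mulVec, one_mulVec] at hmul
    exact smul_left_injective F (ne_zero_of_mem_unitVectors hv.1)
      (hmul.trans (one_smul F v).symm)

theorem div_mem_fixedIsotropicSlopes (hv0 : v ≠ 0) (hv : hermForm v v = 0) (hc : A *ᵥ v = c • v) :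
    v 0 / v 1 ∈ fixedIsotropicSlopes A := by
  have hnorm : v 0 * star (v 0) = v 1 * star (v 1) := sub_eq_zero.mp hv
  have hv1 : v 1 ≠ 0 := by
    intro h1
    have h0 : v 0 = 0 := by simpa [h1] using hnorm
    exact hv0 (funext (Fin.forall_fin_two.mpr ⟨h0, h1⟩))
  have hslope : ![v 0 / v 1, 1] = (v 1)⁻¹ • v := by
    ext i
    fin_cases i <;> simp [hv1, div_eq_inv_mul]
  refine ⟨?_, c, ?_⟩
  · rw [star_div₀, div_mul_div_comm, hnorm, div_self (mul_ne_zero hv1 (star_ne_zero.mpr hv1))]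
  · rw [hslope, mulVec_smul, hc, smul_comm]

theorem fixedUnitVectors_eq_empty (h : 1 - A.trace + A.det ≠ 0) : fixedUnitVectors A = ∅ := by
  refine Set.eq_empty_of_forall_notMem fun v hv => h ?_
  have := exists_mulVec_eq_smul_iff.mp
    ⟨v, ne_zero_of_mem_unitVectors hv.1, hv.2.trans (one_smul F v).symm⟩
  linear_combination this

theorem ncard_fixedIsotropicSlopes_of_trace_eq_zero [Finite F] [CharP F 2]
    (hA : IsPseudoUnitary A) (hns : ¬ IsScalarMatrix A) (htr : A.trace = 0) :
    (fixedIsotropicSlopes A).ncard = 1 := by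
  have heigen {c : F} : (∃ v ≠ 0, A *ᵥ v = c • v) ↔ c ^ 2 = A.det := by
    rw [exists_mulVec_eq_smul_iff, htr, zero_mul, sub_zero, CharTwo.add_eq_zero]
  have hslope {t c : F} (h : A *ᵥ ![t, 1] = c • ![t, 1]) : c ^ 2 = A.det :=
    heigen.mp ⟨_, by simp, h⟩
  obtain ⟨c, hc⟩ := FiniteField.isSquare_of_char_two (ringChar.eq F 2) A.det
  obtain ⟨v, hv0, hv⟩ := heigen.mpr (hc ▸ sq c)
  have hiso : hermForm v v = 0 := by
    by_contra hne
    exact hns (hA.isScalarMatrix_of_trace_eq_two_mul hne hv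
      (by rw [htr, CharTwo.two_eq_zero, zero_mul]))
  refine Set.ncard_eq_one.mpr ⟨v 0 / v 1, Set.eq_singleton_iff_unique_mem.mpr
    ⟨div_mem_fixedIsotropicSlopes hv0 hiso hv, ?_⟩⟩
  rintro t ⟨-, c₁, ht⟩
  obtain ⟨-, c₂, hs⟩ := div_mem_fixedIsotropicSlopes hv0 hiso hv
  obtain rfl : c₁ = c₂ := CharTwo.sq_injective ((hslope ht).trans (hslope hs).symm)
  by_contra hne
  exact hns ⟨c₁, eq_smul_one_of_mulVec_eq_smul (by simpa [sub_eq_zero] using hne) ht hs⟩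

theorem fixCount_of_trace_eq_zero [Finite F] [CharP F 2] (hA : IsPseudoUnitary A)
    (hns : ¬ IsScalarMatrix A) (htr : A.trace = 0) : fixCount A = 1 := by
  have hempty : fixedUnitVectors A = ∅ := by
    refine Set.eq_empty_of_forall_notMem fun v hv => hns ?_
    refine hA.isScalarMatrix_of_trace_eq_two_mul (c := 1) (v := v) ?_ ?_ ?_
    · rw [show hermForm v v = 1 from hv.1]; exact one_ne_zero
    · rw [one_smul, hv.2]
    · rw [htr, CharTwo.two_eq_zero, zero_mul]
  rw [fixCount, hempty, Set.ncard_empty, zero_add,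
    ncard_fixedIsotropicSlopes_of_trace_eq_zero hA hns htr]

theorem fixedIsotropicSlopes_eq_empty (hA : IsPseudoUnitary A) (h3 : (3 : F) ≠ 0)
    (hω : ∀ ω : F, ω ^ 3 = 1 → ω * star ω = 1) (htr : A.trace ^ 2 = A.det) :
    fixedIsotropicSlopes A = ∅ := by
  refine Set.eq_empty_of_forall_notMem ?_
  rintro t ⟨ht, c, hc⟩
  have hT : A.trace ≠ 0 := by
    intro h
    exact hA.det_ne_zero (by rw [← htr, h, zero_pow two_ne_zero])
  have hchar : c ^ 2 - A.trace * c + A.det = 0 := exists_mulVec_eq_smul_iff.mp ⟨_, by simp, hc⟩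
  set ω := -c / A.trace with hω_def
  have hω_root : ω ^ 2 + ω + 1 = 0 := by
    rw [hω_def]
    field_simp
    linear_combination hchar + htr
  have hω_star : star ω = ω := by
    rw [hω_def, star_div₀, star_neg, ← mul_div_mul_left _ _ hA.det_ne_zero, mul_neg,
      hA.det_mul_star_of_isotropic ht hc, hA.det_mul_star_trace]
  have hω_sq : ω * ω = 1 := by
    nth_rw 2 [← hω_star]
    exact hω ω (by linear_combination (ω - 1) * hω_root)
  refine h3 ?_
  linear_combination (2 - ω) * hω_root + (ω - 1) * hω_sq

theorem eq_smul_of_mulVec_eq_self (hns : ¬ IsScalarMatrix A) (hv0 : hermForm v v ≠ 0)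
    (hv : A *ᵥ v = v) {u : Fin 2 → F} (hu : A *ᵥ u = u) :
    u = (hermForm u v / hermForm v v) • v := by
  have hdep : v 0 * u 1 - v 1 * u 0 = 0 := by
    by_contra hne
    exact hns ⟨1, eq_smul_one_of_mulVec_eq_smul hne (by rwa [one_smul]) (by rwa [one_smul])⟩
  have hscaled : hermForm v v • u = hermForm u v • v := by
    refine funext (Fin.forall_fin_two.mpr ⟨?_, ?_⟩) <;>
      simp only [hermForm, Pi.smul_apply, smul_eq_mul]
    · linear_combination star (v 1) * hdep
    · linear_combination star (v 0) * hdep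
  rw [div_eq_inv_mul, mul_smul, ← hscaled, inv_smul_smul₀ hv0]

theorem ncard_fixedUnitVectors [Finite F] {q : ℕ} (hF : Nat.card F = q ^ 2)
    (hstar : ∀ x : F, star x = x ^ q) (hns : ¬ IsScalarMatrix A) (hv0 : hermForm v v ≠ 0)
    (hv : A *ᵥ v = v) : (fixedUnitVectors A).ncard = q + 1 := by
  have hne : v ≠ 0 := by
    rintro rfl
    simp [hermForm] at hv0
  have hunit (c : F) : c • v ∈ unitVectors F ↔ c * star c = (hermForm v v)⁻¹ := by
    rw [unitVectors, Set.mem_ofPred_eq, hermForm_smul_self, mul_eq_one_iff_eq_inv₀ hv0]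
  have himage : fixedUnitVectors A =
      (fun c : F => c • v) '' {c : F | c * star c = (hermForm v v)⁻¹} := by
    ext u
    constructor
    · rintro ⟨hu, hAu⟩
      have hmul := eq_smul_of_mulVec_eq_self hns hv0 hv hAu
      exact ⟨_, (hunit _).mp (hmul ▸ hu), hmul.symm⟩
    · rintro ⟨c, hc, rfl⟩
      exact ⟨(hunit c).mpr hc, by rw [mulVec_smul, hv]⟩
  rw [himage, Set.ncard_image_of_injective _ (smul_left_injective F hne),
    ncard_setOf_mul_star_self_eq hF hstar (inv_ne_zero hv0)
      (by rw [star_inv₀, star_hermForm_self])]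

theorem fixCount_of_trace_sq_eq_det [Finite F] [DecidableEq F] {q : ℕ} (hF : Nat.card F = q ^ 2)
    (hstar : ∀ x : F, star x = x ^ q) (hA : IsPseudoUnitary A) (hns : ¬ IsScalarMatrix A)
    (h3 : (3 : F) ≠ 0) (hω : ∀ ω : F, ω ^ 3 = 1 → ω * star ω = 1)
    (htr : A.trace ^ 2 = A.det) :
    fixCount A = if 1 - A.trace + A.trace ^ 2 = 0 then q + 1 else 0 := by
  have hslopes := fixedIsotropicSlopes_eq_empty hA h3 hω htr
  rw [fixCount, hslopes, Set.ncard_empty, add_zero]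
  split_ifs with h
  · obtain ⟨v, hv0, hv⟩ := (exists_mulVec_eq_smul_iff (A := A) (c := 1)).mpr
      (by linear_combination h - htr)
    refine ncard_fixedUnitVectors hF hstar hns (fun hiso => ?_) (hv.trans (one_smul F v))
    exact hslopes.subset (div_mem_fixedIsotropicSlopes hv0 hiso hv)
  · rw [fixedUnitVectors_eq_empty (by rwa [← htr]), Set.ncard_empty]

end FixedPoints

section FiberSums

open scoped commutatorElement

theorem card_ker_eq_card_inter {G H : Type*} [Group G] [Group H] {L : Subgroup G} {φ : L →* H}
    {Z : Set G} (hφ : ∀ x, φ x = 1 ↔ (x : G) ∈ Z) :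
    Nat.card φ.ker = Nat.card (L ∩ Z : Set G) := by
  have himage : (L ∩ Z : Set G) = Subtype.val '' (φ.ker : Set L) := by
    rw [← Subtype.image_preimage_coe]
    exact congrArg (Subtype.val '' ·) (Set.ext fun x => (hφ x).symm)
  rw [himage, Nat.card_image_of_injective Subtype.val_injective]
  rfl

theorem sum_fiber_eq_sum_ker {G H M : Type*} [Group G] [Group H] [AddCommMonoid M] [Fintype G]
    [DecidableEq H] (φ : G →* H) [Fintype φ.ker] (h : G) (f : G → M) :
    ∑ g with φ g = φ h, f g = ∑ k : φ.ker, f (h * k) := by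
  refine (Finset.sum_bij (fun (k : φ.ker) _ => h * (k : G)) ?_ ?_ ?_ fun _ _ => rfl).symm
  · intro k _
    simp [MonoidHom.mem_ker.mp k.2]
  · intro k _ l _ hkl
    exact Subtype.ext (mul_left_cancel hkl)
  · intro g hg
    refine ⟨⟨h⁻¹ * g, ?_⟩, Finset.mem_univ _, mul_inv_cancel_left h g⟩
    rw [MonoidHom.mem_ker, map_mul, map_inv, (Finset.mem_filter.mp hg).2, inv_mul_cancel]

variable {F G H : Type*} [Field F] [Group G] [Group H] {ρ : G →* Matrix (Fin 2) (Fin 2) F}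
  {φ : G →* H}

theorem exists_map_eq_commutator_and_det_eq_one {π σ : H} (hφ : Function.Surjective φ) :
    ∃ h, φ h = ⁅π, σ⁆ ∧ (ρ h).det = 1 := by
  obtain ⟨s, rfl⟩ := hφ π
  obtain ⟨t, rfl⟩ := hφ σ
  refine ⟨⁅s, t⁆, map_commutatorElement φ s t, ?_⟩
  let δ : G →* Fˣ := (detMonoidHom.comp ρ).toHomUnits
  have hδ : δ ⁅s, t⁆ = 1 := by
    rw [map_commutatorElement, commutatorElement_eq_one_iff_mul_comm, mul_comm]
  exact congrArg Units.val hδ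

/-- If a representation `ρ` is scalar on the kernel of `φ`, the character by which the kernel
acts. -/
def kerCharacter (hker : ∀ g ∈ φ.ker, IsScalarMatrix (ρ g)) : φ.ker →* F where
  toFun k := ρ k 0 0
  map_one' := by simp
  map_mul' k l := by
    have hk := (hker k k.2).eq_smul_one
    rw [Subgroup.coe_mul, map_mul, hk]
    simp

variable (hker : ∀ g ∈ φ.ker, IsScalarMatrix (ρ g))

theorem map_ker_eq_kerCharacter_smul_one (k : φ.ker) : ρ k = kerCharacter hker k • 1 :=
  (hker k k.2).eq_smul_one

theorem map_mul_ker (g : G) (k : φ.ker) : ρ (g * k) = kerCharacter hker k • ρ g := by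
  rw [map_mul, map_ker_eq_kerCharacter_smul_one hker, mul_smul_comm, mul_one]

theorem kerCharacter_injective (hρ : Function.Injective ρ) :
    Function.Injective (kerCharacter hker) := fun k l hkl =>
  Subtype.ext (hρ (by rw [map_ker_eq_kerCharacter_smul_one hker k, hkl,
    ← map_ker_eq_kerCharacter_smul_one hker l]))

theorem one_sub_kerCharacter_add_sq_eq_zero_iff [CharP F 2]
    (hρ : Function.Injective ρ) (k : φ.ker) :
    1 - kerCharacter hker k + kerCharacter hker k ^ 2 = 0 ↔ orderOf k = 3 := by
  set ε := kerCharacter hker k with hε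
  rw [orderOf_eq_prime_iff, ← (kerCharacter_injective hker hρ).eq_iff,
    ← (kerCharacter_injective hker hρ).ne_iff, map_pow, map_one, ← hε]
  have h2 : (2 : F) = 0 := CharTwo.two_eq_zero
  constructor
  · intro h
    refine ⟨by linear_combination (ε - 1) * h + (ε ^ 2 - ε) * h2, ?_⟩
    intro hone
    simp [hone] at h
  · rintro ⟨hcube, hone⟩
    refine mul_left_cancel₀ (sub_ne_zero.mpr hone) ?_
    linear_combination hcube - (ε ^ 2 - ε) * h2

theorem sum_ker_fixCount [StarRing F] [Finite F] [Fintype φ.ker] {q : ℕ}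
    (hF : Nat.card F = q ^ 2) (hstar : ∀ x : F, star x = x ^ q) (hρ : Function.Injective ρ)
    (hker : ∀ g ∈ φ.ker, IsScalarMatrix (ρ g)) :
    ∑ k : φ.ker, fixCount (ρ k) = (unitVectors F).ncard + Nat.card φ.ker * (q + 1) := by
  classical
  simp only [map_ker_eq_kerCharacter_smul_one hker, fixCount_smul_one hF hstar,
    Finset.sum_add_distrib, Finset.sum_const, Finset.card_univ, smul_eq_mul,
    Nat.card_eq_fintype_card, ← map_one (kerCharacter hker),
    (kerCharacter_injective hker hρ).eq_iff, Finset.sum_ite_eq', Finset.mem_univ, if_true, mul_add]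

theorem fixCount_of_map_sq_eq_one [StarRing F] [Finite F] [CharP F 2]
    (hker : ∀ g, φ g = 1 ↔ IsScalarMatrix (ρ g)) (hpu : ∀ g, IsPseudoUnitary (ρ g))
    {g : G} (hg : φ g ≠ 1) (hg2 : φ g ^ 2 = 1) :
    fixCount (ρ g) = 1 := by
  have hns : ¬ IsScalarMatrix (ρ g) := mt (hker g).mpr hg
  refine fixCount_of_trace_eq_zero (hpu g) hns (trace_eq_zero_of_isScalarMatrix_sq hns ?_)
  rwa [← map_pow, ← hker, map_pow]

theorem sum_ker_fixCount_of_map_cube_eq_one [StarRing F] [Finite F] [CharP F 2] [Fintype φ.ker]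
    {q : ℕ} (hF : Nat.card F = q ^ 2) (hstar : ∀ x : F, star x = x ^ q)
    (hρ : Function.Injective ρ) (hker : ∀ g, φ g = 1 ↔ IsScalarMatrix (ρ g))
    (hpu : ∀ g, IsPseudoUnitary (ρ g))
    (hω : ∀ ω : F, ω ^ 3 = 1 → ω * star ω = 1) (h3ker : 3 ∣ Nat.card φ.ker)
    {h : G} (hh : φ h ≠ 1) (hh3 : φ h ^ 3 = 1) (hdet : (ρ h).det = 1) :
    ∑ k : φ.ker, fixCount (ρ (h * k)) = 2 * (q + 1) := by
  classical
  have h3 : (3 : F) ≠ 0 := by simp [show (3 : F) = 2 + 1 by norm_num, CharTwo.two_eq_zero]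
  have hsc (g : G) (hg : g ∈ φ.ker) : IsScalarMatrix (ρ g) := (hker g).mp hg
  have hns (k : φ.ker) : ¬ IsScalarMatrix (ρ (h * k)) := by
    rwa [← hker, map_mul, MonoidHom.mem_ker.mp k.2, mul_one]
  have htrsq (k : φ.ker) : (ρ (h * k)).trace ^ 2 = (ρ (h * k)).det := by
    refine trace_sq_eq_det_of_isScalarMatrix_cube (hns k) ?_
    rwa [← map_pow, ← hker, map_pow, map_mul, MonoidHom.mem_ker.mp k.2, mul_one]
  have htr : (ρ h).trace = 1 := by
    refine CharTwo.sq_injective ?_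
    simpa [hdet] using htrsq 1
  have hfix (k : φ.ker) : fixCount (ρ (h * k)) = if orderOf k = 3 then q + 1 else 0 := by
    rw [fixCount_of_trace_sq_eq_det hF hstar (hpu _) (hns k) h3 hω (htrsq k), map_mul_ker hsc,
      trace_smul, htr, smul_eq_mul, mul_one]
    simp only [one_sub_kerCharacter_add_sq_eq_zero_iff hsc hρ k]
  have hcyc : IsCyclic φ.ker :=
    isCyclic_of_injective_ringHom (kerCharacter hsc) (kerCharacter_injective hsc hρ)
  rw [Finset.sum_congr rfl fun k _ => hfix k, ← Finset.sum_filter, Finset.sum_const,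
    IsCyclic.card_orderOf_eq_totient (Nat.card_eq_fintype_card (α := φ.ker) ▸ h3ker),
    Nat.totient_prime Nat.prime_three, smul_eq_mul]

end FiberSums

section PermThree

open scoped commutatorElement

theorem sum_perm_three {M : Type*} [AddCommMonoid M] (a b c : M) :
    ∑ σ : Equiv.Perm (Fin 3), (if σ = 1 then a else if σ ^ 2 = 1 then b else c) =
      a + 3 • b + 2 • c := by
  rw [Finset.sum_ite, Finset.sum_ite, Finset.sum_const, Finset.sum_const, Finset.sum_const,
    ← add_assoc, Finset.filter_filter, Finset.filter_filter]
  rw [show (Finset.univ.filter fun σ : Equiv.Perm (Fin 3) => σ = 1).card = 1 by decide,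
    show (Finset.univ.filter fun σ : Equiv.Perm (Fin 3) => ¬ σ = 1 ∧ σ ^ 2 = 1).card = 3 by decide,
    show (Finset.univ.filter fun σ : Equiv.Perm (Fin 3) => ¬ σ = 1 ∧ ¬ σ ^ 2 = 1).card = 2 by
      decide, one_smul]

theorem pow_three_eq_one_and_exists_commutator {σ : Equiv.Perm (Fin 3)} (hσ : σ ^ 2 ≠ 1) :
    σ ^ 3 = 1 ∧ ∃ π τ : Equiv.Perm (Fin 3), ⁅π, τ⁆ = σ := by
  revert σ
  decide

theorem card_eq_six_mul_card_ker {G : Type*} [Group G] {φ : G →* Equiv.Perm (Fin 3)}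
    (hφ : Function.Surjective φ) : Nat.card G = 6 * Nat.card φ.ker := by
  rw [← Subgroup.card_mul_index φ.ker, Subgroup.index_ker, MonoidHom.range_eq_top.mpr hφ,
    Subgroup.card_top, Nat.card_perm, Nat.card_fin, mul_comm]
  rfl

variable {F G : Type*} [Field F] [StarRing F] [Finite F] [CharP F 2] [Group G] [Fintype G]
  {ρ : G →* Matrix (Fin 2) (Fin 2) F} {φ : G →* Equiv.Perm (Fin 3)} {q : ℕ}

theorem sum_fiber_fixCount (hF : Nat.card F = q ^ 2) (hstar : ∀ x : F, star x = x ^ q)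
    (hω : ∀ ω : F, ω ^ 3 = 1 → ω * star ω = 1) (hρ : Function.Injective ρ)
    (hpu : ∀ g, IsPseudoUnitary (ρ g)) (hφ : Function.Surjective φ)
    (hker : ∀ g, φ g = 1 ↔ IsScalarMatrix (ρ g)) (h3ker : 3 ∣ Nat.card φ.ker)
    (σ : Equiv.Perm (Fin 3)) :
    ∑ g with φ g = σ, fixCount (ρ g) =
      if σ = 1 then (unitVectors F).ncard + Nat.card φ.ker * (q + 1)
      else if σ ^ 2 = 1 then Nat.card φ.ker else 2 * (q + 1) := by
  classical
  split_ifs with h1 h2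
  · rw [h1, ← map_one φ, sum_fiber_eq_sum_ker]
    simp only [one_mul]
    exact sum_ker_fixCount hF hstar hρ fun g hg => (hker g).mp hg
  · obtain ⟨h, rfl⟩ := hφ σ
    have hfix (k : φ.ker) : fixCount (ρ (h * k)) = 1 := by
      have hφk : φ (h * k) = φ h := by rw [map_mul, MonoidHom.mem_ker.mp k.2, mul_one]
      exact fixCount_of_map_sq_eq_one hker hpu (hφk ▸ h1) (hφk ▸ h2)
    rw [sum_fiber_eq_sum_ker, Finset.sum_congr rfl fun k _ => hfix k, Finset.sum_const,
      Finset.card_univ, Nat.card_eq_fintype_card, smul_eq_mul, mul_one]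
  · obtain ⟨hcube, π, τ, rfl⟩ := pow_three_eq_one_and_exists_commutator h2
    obtain ⟨h, hh, hdet⟩ := exists_map_eq_commutator_and_det_eq_one (ρ := ρ) (π := π) (σ := τ) hφ
    rw [← hh] at h1 hcube ⊢
    rw [sum_fiber_eq_sum_ker]
    exact sum_ker_fixCount_of_map_cube_eq_one hF hstar hρ hker hpu hω h3ker h1 hcube hdet

theorem sum_fixCount (hF : Nat.card F = q ^ 2) (hstar : ∀ x : F, star x = x ^ q)
    (hω : ∀ ω : F, ω ^ 3 = 1 → ω * star ω = 1) (hρ : Function.Injective ρ)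
    (hpu : ∀ g, IsPseudoUnitary (ρ g)) (hφ : Function.Surjective φ)
    (hker : ∀ g, φ g = 1 ↔ IsScalarMatrix (ρ g)) (h3ker : 3 ∣ Nat.card φ.ker) :
    ∑ g, fixCount (ρ g) =
      (unitVectors F).ncard + Nat.card φ.ker * (q + 1) + 3 * Nat.card φ.ker + 4 * (q + 1) := by
  rw [← Finset.sum_fiberwise Finset.univ φ, Finset.sum_congr rfl fun σ _ =>
    sum_fiber_fixCount hF hstar hω hρ hpu hφ hker h3ker σ, sum_perm_three]
  simp only [smul_eq_mul]
  ring

end PermThree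

section Burnside

open MulAction

variable {G X : Type*} [Group G] [MulAction G X]

theorem sum_ncard_fixed_eq_ncard_orbits_mul_card [Fintype G] [Finite X] (s : SubMulAction G X) :
    ∑ g : G, {x | x ∈ s ∧ g • x = x}.ncard = (orbit G '' (s : Set X)).ncard * Nat.card G := by
  classical
  have : Fintype (orbitRel.Quotient G s) := Fintype.ofFinite _
  have (g : G) : Fintype (fixedBy s g) := Fintype.ofFinite _
  have hfixed (g : G) : {x | x ∈ s ∧ g • x = x}.ncard = Fintype.card (fixedBy s g) := by
    rw [← Nat.card_eq_fintype_card, Nat.card_coe_set_eq,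
      ← Set.ncard_image_of_injective _ Subtype.val_injective]
    congr 1
    ext x
    exact ⟨fun ⟨hx, hgx⟩ => ⟨⟨x, hx⟩, Subtype.ext hgx, rfl⟩,
      fun ⟨y, hy, hyx⟩ => hyx ▸ ⟨y.2, congrArg Subtype.val hy⟩⟩
  have horbits : orbit G '' (s : Set X) =
      Set.range fun z : orbitRel.Quotient G s => Subtype.val '' z.orbit := by
    rw [← Quotient.mk''_surjective.range_comp, Set.image_eq_range]
    exact congrArg Set.range (funext fun x => (SubMulAction.val_image_orbit x).symm)
  have hinj : Function.Injective
      fun z : orbitRel.Quotient G s => (Subtype.val '' z.orbit : Set X) :=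
    (Set.image_injective.mpr Subtype.val_injective).comp orbitRel.Quotient.orbit_injective
  rw [horbits, Set.ncard_range_of_injective hinj, Nat.card_eq_fintype_card,
    Nat.card_eq_fintype_card, ← sum_card_fixedBy_eq_card_orbits_mul_card_group]
  exact Finset.sum_congr rfl fun g _ => hfixed g

end Burnside

section ProjectivePlane

variable {F : Type*} [Field F]

/-- The block matrix `A ⊕ 1`. -/
def extendByOne (A : Matrix (Fin 2) (Fin 2) F) : Matrix (Fin 3) (Fin 3) F :=
  !![A 0 0, A 0 1, 0; A 1 0, A 1 1, 0; 0, 0, 1]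

theorem extendByOne_injective :
    Function.Injective (extendByOne : Matrix (Fin 2) (Fin 2) F → Matrix (Fin 3) (Fin 3) F) := by
  intro A B hAB
  ext i j
  have h := congrFun₂ hAB i.castSucc j.castSucc
  fin_cases i <;> fin_cases j <;> exact h

theorem extendByOne_one : extendByOne (1 : Matrix (Fin 2) (Fin 2) F) = 1 := by
  simp [extendByOne, one_fin_three]

theorem extendByOne_mul (A B : Matrix (Fin 2) (Fin 2) F) :
    extendByOne (A * B) = extendByOne A * extendByOne B := by
  ext i j
  fin_cases i <;> fin_cases j <;> simp [extendByOne, mul_apply, Fin.sum_univ_three]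

theorem extendByOne_mulVec (A : Matrix (Fin 2) (Fin 2) F) (v : Fin 3 → F) :
    extendByOne A *ᵥ v = ![(A *ᵥ ![v 0, v 1]) 0, (A *ᵥ ![v 0, v 1]) 1, v 2] := by
  ext i
  fin_cases i <;> simp [extendByOne, mulVec, dotProduct, Fin.sum_univ_three]

/-- The point `(x : y : 1)` of the projective plane. -/
def affinePoint (v : Fin 2 → F) : Projectivization F (Fin 3 → F) :=
  Projectivization.mk F ![v 0, v 1, 1] fun h => one_ne_zero (congrFun h 2)

/-- The point `(t : 1 : 0)` of the projective plane. -/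
def infinitePoint (t : F) : Projectivization F (Fin 3 → F) :=
  Projectivization.mk F ![t, 1, 0] fun h => one_ne_zero (congrFun h 1)

theorem affinePoint_injective :
    Function.Injective (affinePoint : (Fin 2 → F) → Projectivization F (Fin 3 → F)) := by
  intro v w h
  obtain ⟨u, hu⟩ := (Projectivization.mk_eq_mk_iff' F _ _ _ _).mp h
  have hu1 : u = 1 := by simpa using congrFun hu 2
  subst hu1
  exact funext (Fin.forall_fin_two.mpr
    ⟨by simpa using (congrFun hu 0).symm, by simpa using (congrFun hu 1).symm⟩)

theorem infinitePoint_injective :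
    Function.Injective (infinitePoint : F → Projectivization F (Fin 3 → F)) := by
  intro s t h
  obtain ⟨u, hu⟩ := (Projectivization.mk_eq_mk_iff' F _ _ _ _).mp h
  have hu1 : u = 1 := by simpa using congrFun hu 1
  subst hu1
  simpa using (congrFun hu 0).symm

theorem affinePoint_ne_infinitePoint (v : Fin 2 → F) (t : F) :
    affinePoint v ≠ infinitePoint t := by
  intro h
  obtain ⟨u, hu⟩ := (Projectivization.mk_eq_mk_iff' F _ _ _ _).mp h
  simpa using congrFun hu 2

theorem mk_eq_affinePoint {v : Fin 3 → F} (hv : v ≠ 0) (h2 : v 2 ≠ 0) :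
    Projectivization.mk F v hv = affinePoint ![v 0 / v 2, v 1 / v 2] := by
  refine (Projectivization.mk_eq_mk_iff' F _ _ _ _).mpr ⟨v 2, ?_⟩
  ext i
  fin_cases i <;> simp [mul_div_cancel₀, h2]

theorem mk_eq_infinitePoint {v : Fin 3 → F} (hv : v ≠ 0) (h1 : v 1 ≠ 0) (h2 : v 2 = 0) :
    Projectivization.mk F v hv = infinitePoint (v 0 / v 1) := by
  refine (Projectivization.mk_eq_mk_iff' F _ _ _ _).mpr ⟨v 1, ?_⟩
  ext i
  fin_cases i <;> simp [mul_div_cancel₀, h1, h2]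

variable {g : GL (Fin 3) F} {A : Matrix (Fin 2) (Fin 2) F}

theorem smul_affinePoint_eq_self_iff (hg : (g : Matrix (Fin 3) (Fin 3) F) = extendByOne A)
    (v : Fin 2 → F) : g • affinePoint v = affinePoint v ↔ A *ᵥ v = v := by
  have hsmul : g • affinePoint v = affinePoint (A *ᵥ v) := by
    refine (Projectivization.mk_eq_mk_iff' F _ _ _ _).mpr ⟨1, ?_⟩
    have hv : ![v 0, v 1] = v := funext (Fin.forall_fin_two.mpr ⟨rfl, rfl⟩)
    change _ = (g : Matrix (Fin 3) (Fin 3) F) *ᵥ _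
    rw [hg, extendByOne_mulVec, one_smul]
    simp only [cons_val_zero, cons_val_one, cons_val, hv]
  rw [hsmul, affinePoint_injective.eq_iff]

theorem smul_infinitePoint_eq_self_iff (hg : (g : Matrix (Fin 3) (Fin 3) F) = extendByOne A)
    (t : F) :
    g • infinitePoint t = infinitePoint t ↔ ∃ c : F, A *ᵥ ![t, 1] = c • ![t, 1] := by
  refine (Projectivization.mk_eq_mk_iff' F _ _ _ _).trans (exists_congr fun c => ?_)
  change _ = (g : Matrix (Fin 3) (Fin 3) F) *ᵥ _ ↔ _
  rw [hg, extendByOne_mulVec, eq_comm]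
  simp [funext_iff, Fin.forall_fin_succ]

variable [StarRing F] {q : ℕ}

theorem mk_mem_hermitianPts_iff (hstar : ∀ x : F, star x = x ^ q) {v : Fin 3 → F} (hv : v ≠ 0) :
    Projectivization.mk F v hv ∈ hermitianPts q F ↔
      hermForm ![v 0, v 1] ![v 0, v 1] = v 2 * star (v 2) := by
  obtain ⟨u, hu⟩ := Projectivization.exists_smul_eq_mk_rep F v hv
  have hu0 : (u : F) ^ (q + 1) ≠ 0 := pow_ne_zero _ u.ne_zero
  simp only [hermitianPts, Set.mem_ofPred_eq, ← hu, Pi.smul_apply, Units.smul_def, smul_eq_mul,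
    mul_pow, ← mul_sub, mul_right_inj' hu0, hermForm, cons_val_zero, cons_val_one,
    mul_star_self_eq_pow hstar]
  exact ⟨fun h => by linear_combination -h, fun h => by linear_combination -h⟩

theorem affinePoint_mem_hermitianPts_iff (hstar : ∀ x : F, star x = x ^ q) {v : Fin 2 → F} :
    affinePoint v ∈ hermitianPts q F ↔ v ∈ unitVectors F := by
  rw [affinePoint, mk_mem_hermitianPts_iff hstar]
  simp [unitVectors, hermForm]

theorem infinitePoint_mem_hermitianPts_iff (hstar : ∀ x : F, star x = x ^ q) {t : F} :
    infinitePoint t ∈ hermitianPts q F ↔ t * star t = 1 := by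
  rw [infinitePoint, mk_mem_hermitianPts_iff hstar]
  simp [hermForm, sub_eq_zero]

theorem hermitianPts_eq_union (hstar : ∀ x : F, star x = x ^ q) :
    hermitianPts q F =
      affinePoint '' unitVectors F ∪ infinitePoint '' {t : F | t * star t = 1} := by
  refine Set.Subset.antisymm (fun x hx => ?_) (Set.union_subset ?_ ?_)
  · induction x using Projectivization.ind with | h v hv =>
    by_cases h2 : v 2 = 0
    · have h1 : v 1 ≠ 0 := by
        intro h1
        have h0 : v 0 = 0 := by
          simpa [hermForm, h1, h2] using (mk_mem_hermitianPts_iff hstar hv).mp hx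
        exact hv (by ext i; fin_cases i <;> assumption)
      rw [mk_eq_infinitePoint hv h1 h2] at hx ⊢
      exact Or.inr ⟨_, (infinitePoint_mem_hermitianPts_iff hstar).mp hx, rfl⟩
    · rw [mk_eq_affinePoint hv h2] at hx ⊢
      exact Or.inl ⟨_, (affinePoint_mem_hermitianPts_iff hstar).mp hx, rfl⟩
  · rintro _ ⟨v, hv, rfl⟩
    exact (affinePoint_mem_hermitianPts_iff hstar).mpr hv
  · rintro _ ⟨t, ht, rfl⟩
    exact (infinitePoint_mem_hermitianPts_iff hstar).mpr ht

theorem ncard_fixed_hermitianPts [Finite F] (hstar : ∀ x : F, star x = x ^ q)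
    (hg : (g : Matrix (Fin 3) (Fin 3) F) = extendByOne A) :
    {x | x ∈ hermitianPts q F ∧ g • x = x}.ncard = fixCount A := by
  have hunion : {x | x ∈ hermitianPts q F ∧ g • x = x} =
      affinePoint '' fixedUnitVectors A ∪ infinitePoint '' fixedIsotropicSlopes A := by
    change hermitianPts q F ∩ {x | g • x = x} = _
    rw [hermitianPts_eq_union hstar, Set.union_inter_distrib_right, ← Set.image_inter_preimage,
      ← Set.image_inter_preimage]
    simp only [Set.preimage_ofPred_eq, smul_affinePoint_eq_self_iff hg,
      smul_infinitePoint_eq_self_iff hg]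
    rfl
  have hdisj : Disjoint (affinePoint '' fixedUnitVectors A)
      (infinitePoint '' fixedIsotropicSlopes A) := by
    rw [Set.disjoint_left]
    rintro _ ⟨v, -, rfl⟩ ⟨t, -, ht⟩
    exact affinePoint_ne_infinitePoint v t ht.symm
  rw [hunion, Set.ncard_union_eq hdisj, Set.ncard_image_of_injective _ affinePoint_injective,
    Set.ncard_image_of_injective _ infinitePoint_injective, fixCount]

theorem smul_mem_hermitianPts (hstar : ∀ x : F, star x = x ^ q)
    (hg : (g : Matrix (Fin 3) (Fin 3) F) = extendByOne A) (hA : IsPseudoUnitary A)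
    {x : Projectivization F (Fin 3 → F)} (hx : x ∈ hermitianPts q F) :
    g • x ∈ hermitianPts q F := by
  induction x using Projectivization.ind with | h v hv =>
  rw [mk_mem_hermitianPts_iff hstar, ← hA] at hx
  rw [Projectivization.smul_mk, mk_mem_hermitianPts_iff hstar]
  have hgv : g • v = ![(A *ᵥ ![v 0, v 1]) 0, (A *ᵥ ![v 0, v 1]) 1, v 2] :=
    (congrArg (· *ᵥ v) hg).trans (extendByOne_mulVec A v)
  rw [hgv]
  exact hx

end ProjectivePlane

section UnitaryStabiliser

variable {F : Type*} [Field F] {q : ℕ}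

theorem mem_ZSet_iff_exists {g : GL (Fin 3) F} : g ∈ ZSet q F ↔
    ∃ ε : F, ε ^ (q + 1) = 1 ∧ (g : Matrix (Fin 3) (Fin 3) F) = extendByOne (ε • 1) := by
  refine exists_congr fun ε => and_congr_right fun _ => ?_
  have hdiag : diagonal ![ε, ε, 1] = extendByOne (ε • 1) := by
    ext i j
    fin_cases i <;> fin_cases j <;> simp [extendByOne]
  rw [hdiag]

variable [StarRing F]

theorem exists_extendByOne_of_mem_MlSet (hstar : ∀ x : F, star x = x ^ q) {g : GL (Fin 3) F}
    (hg : g ∈ MlSet q F) :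
    ∃ A, IsPseudoUnitary A ∧ (g : Matrix (Fin 3) (Fin 3) F) = extendByOne A := by
  obtain ⟨a, c, τ, hac, hτ, hg⟩ := hg
  refine ⟨!![a, τ * star c; c, τ * star a], fun v w => ?_, by simp [hg, extendByOne, hstar]⟩
  rw [← mul_star_self_eq_pow hstar] at hτ
  rw [← mul_star_self_eq_pow hstar, ← mul_star_self_eq_pow hstar] at hac
  simp only [hermForm, mulVec_fin_two, of_apply, cons_val_zero, cons_val_one, star_add, star_mul',
    star_star]
  linear_combination (v 0 * star (w 0) - v 1 * star (w 1) * τ * star τ) * hac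
    - v 1 * star (w 1) * hτ

theorem mem_ZSet_iff_isScalarMatrix (hstar : ∀ x : F, star x = x ^ q) {g : GL (Fin 3) F}
    {A : Matrix (Fin 2) (Fin 2) F} (hg : (g : Matrix (Fin 3) (Fin 3) F) = extendByOne A)
    (hA : IsPseudoUnitary A) : g ∈ ZSet q F ↔ IsScalarMatrix A := by
  simp only [mem_ZSet_iff_exists, hg, extendByOne_injective.eq_iff, IsScalarMatrix]
  refine exists_congr fun c => and_iff_right_of_imp ?_
  rintro rfl
  rw [← mul_star_self_eq_pow hstar]
  exact hA.mul_star_self_eq_one_of_mulVec_eq_smul (v := ![1, 0]) (by simp [hermForm])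
    (by rw [smul_mulVec, one_mulVec])

theorem exists_injective_hom_extendByOne (hstar : ∀ x : F, star x = x ^ q)
    {L : Subgroup (GL (Fin 3) F)} (hL : (L : Set (GL (Fin 3) F)) ⊆ MlSet q F) :
    ∃ ρ : L →* Matrix (Fin 2) (Fin 2) F, Function.Injective ρ ∧ ∀ g, IsPseudoUnitary (ρ g) ∧
      ((g : GL (Fin 3) F) : Matrix (Fin 3) (Fin 3) F) = extendByOne (ρ g) := by
  have hblock (g : L) := exists_extendByOne_of_mem_MlSet hstar (hL g.2)
  choose ρ hpu hρ using hblock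
  refine ⟨⟨⟨ρ, ?_⟩, fun g k => ?_⟩, fun g k hgk => ?_, fun g => ⟨hpu g, hρ g⟩⟩
  · exact extendByOne_injective ((hρ 1).symm.trans extendByOne_one.symm)
  · refine extendByOne_injective ?_
    rw [extendByOne_mul, ← hρ, ← hρ, ← hρ]
    rfl
  · exact Subtype.ext (Units.ext ((hρ g).trans ((congrArg extendByOne hgk).trans (hρ k).symm)))

end UnitaryStabiliser

section OrbitCount

/-- The involution `x ↦ x ^ q` of the field with `q ^ 2` elements, in the role of complex
conjugation. -/
abbrev frobeniusStarRing {F : Type*} [Field F] [Finite F] {p n : ℕ} [ExpChar F p]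
    (hF : Nat.card F = (p ^ n) ^ 2) : StarRing F where
  star x := x ^ p ^ n
  star_involutive x := by
    have : Fintype F := Fintype.ofFinite F
    change (x ^ p ^ n) ^ p ^ n = x
    rw [← pow_mul, ← sq, ← hF, Nat.card_eq_fintype_card, FiniteField.pow_card]
  star_mul x y := by rw [mul_comm, mul_pow]
  star_add x y := add_pow_expChar_pow x y p n

variable {F : Type*} [Field F] [StarRing F] [Finite F] {q : ℕ} {L : Subgroup (GL (Fin 3) F)}

theorem sum_fixCount_eq_numOrbits_mul_card [Fintype L] (hstar : ∀ x : F, star x = x ^ q)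
    {ρ : L → Matrix (Fin 2) (Fin 2) F} (hρ : ∀ g : L, IsPseudoUnitary (ρ g) ∧
      ((g : GL (Fin 3) F) : Matrix (Fin 3) (Fin 3) F) = extendByOne (ρ g)) :
    ∑ g, fixCount (ρ g) = numOrbits L (hermitianPts q F) * Nat.card L := by
  let s : SubMulAction L (Projectivization F (Fin 3 → F)) :=
    ⟨hermitianPts q F, fun g _ hx => smul_mem_hermitianPts hstar (hρ g).2 (hρ g).1 hx⟩
  have horbits : numOrbits L (hermitianPts q F) =
      (MulAction.orbit L '' (s : Set (Projectivization F (Fin 3 → F)))).ncard := by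
    have horbit (x : Projectivization F (Fin 3 → F)) :
        {y | ∃ g ∈ L, glAct g x = y} = MulAction.orbit L x :=
      Set.ext fun y => ⟨fun ⟨g, hg, hgx⟩ => ⟨⟨g, hg⟩, hgx⟩, fun ⟨g, hgx⟩ => ⟨g, g.2, hgx⟩⟩
    rw [numOrbits, funext horbit]
    rfl
  rw [horbits, ← sum_ncard_fixed_eq_ncard_orbits_mul_card]
  exact Finset.sum_congr rfl fun g _ => (ncard_fixed_hermitianPts hstar (hρ g).2).symm

end OrbitCount

theorem stmt6 (h q w : ℕ) (hh : 1 ≤ h) (hq : q = 2 ^ h) (hodd : Odd h)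
    (F : Type*) [Field F] [Fintype F] (hF : Fintype.card F = q ^ 2)
    (hw : w ∣ q + 1) (h3w : 3 ∣ w)
    (L : Subgroup (GL (Fin 3) F)) (hLMl : (L : Set (GL (Fin 3) F)) ⊆ MlSet q F)
    (hZcard : Nat.card ((L : Set (GL (Fin 3) F)) ∩ ZSet q F : Set (GL (Fin 3) F)) = w)
    (hquot : ∃ φ : ↥L →* Equiv.Perm (Fin 3), Function.Surjective φ ∧
      ∀ x : ↥L, φ x = 1 ↔ (x : GL (Fin 3) F) ∈ ZSet q F) :
    (numOrbits L (hermitianPts q F) : ℚ)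
      = ((q : ℚ) + 4) / 6 + ((q : ℚ) + 1) / (w : ℚ)
        + ((q : ℚ) + 1) * ((q : ℚ) ^ 2 - (q : ℚ) - 2) / (6 * (w : ℚ)) := by
  subst hq
  have : CharP F 2 := charP_of_card_eq_prime_pow (f := h * 2) (by rw [hF, pow_mul])
  have : Fintype L := Fintype.ofFinite L
  rw [← Nat.card_eq_fintype_card] at hF
  let _ : StarRing F := frobeniusStarRing hF
  have hstar (x : F) : star x = x ^ 2 ^ h := rfl
  have hω (ω : F) (hω3 : ω ^ 3 = 1) : ω * star ω = 1 := by
    rw [mul_star_self_eq_pow hstar]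
    exact orderOf_dvd_iff_pow_eq_one.mp ((orderOf_dvd_of_pow_eq_one hω3).trans (h3w.trans hw))
  obtain ⟨φ, hφ, hφZ⟩ := hquot
  obtain rfl : Nat.card φ.ker = w := (card_ker_eq_card_inter hφZ).trans hZcard
  obtain ⟨ρ, hρ, hblock⟩ := exists_injective_hom_extendByOne hstar hLMl
  have hker (g : L) : φ g = 1 ↔ IsScalarMatrix (ρ g) :=
    (hφZ g).trans (mem_ZSet_iff_isScalarMatrix hstar (hblock g).2 (hblock g).1)
  have hsum := sum_fixCount hF hstar hω hρ (fun g => (hblock g).1) hφ hker h3w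
  rw [sum_fixCount_eq_numOrbits_mul_card hstar hblock, card_eq_six_mul_card_ker hφ] at hsum
  have hsumℚ := congrArg (Nat.cast : ℕ → ℚ) hsum
  have hunit := congrArg (Nat.cast : ℕ → ℚ) (ncard_unitVectors_add hF hstar)
  have hw0 : (Nat.card φ.ker : ℚ) ≠ 0 := Nat.cast_ne_zero.mpr Nat.card_pos.ne'
  push_cast at hsumℚ hunit ⊢
  field_simp
  linear_combination hsumℚ + hunit
end

section
/- Let f | h with f > 1 and let w be a divisor of q+1. Let L̄ ≤ M_ℓ be a subgroup such that |L̄ ∩ Z| = w and L̄ is the internal direct product of L̄ ∩ Z and a subgroup S isomorphic to SL(2, 𝔽_{2^f}). If h/f is odd, then the number N of orbits of L̄ acting on O equals 1 + (q−2^f)/(2^f(2^{2f}−1)) + (q+1)·gcd(w, 2^f+1)/((2^f+1)·w) + ((q+1)/w)·(q(q−1) − 2^f(2^f−1))/(2^f(2^f−1)(2^f+1)). If h/f is even, then N = 2 + (q−2^{2f})/(2^f(2^{2f}−1)) + (q/2^f)·((q−1)/(2^{2f}−1))·((q+1)/w). -/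
/-!
In characteristic 2 every character of odd order of `SL(2, K)` is trivial. Hence `S` has
determinant 1, so it lies in a copy of `SU(1, 1)`, and `L` is the image of `SL(2, K) × μ_w` for an
injective unitary representation `ρ` of `SL(2, K)`, where `μ_w` acts by scalars on the first two
coordinates. By Burnside's lemma it suffices to count the fixed points of `ε ρ(g)` on the Hermitian
curve.

The affine fixed points are the vectors of norm one in the eigenspace of `B = ρ(g)` for the
eigenvalue `ε⁻¹`: for `ε ≠ 1` there are `q + 1` of them if `ε⁻¹` is an eigenvalue of `B` and none
otherwise, and for `ε = 1` there are `q³ - q` if `B = 1` and none otherwise. The fixed points at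
infinity do not depend on `ε`, and for `B ≠ 1` they correspond to the eigenvalues of `B` in `𝔽_q`.
Summing over `ε` and `g`, everything is expressed by the numbers of `g ∈ SL(2, K)` with `g ^ n = 1`
for `n = 2`, `w` and `q - 1`. For odd `n` such an element `g ≠ 1` has exactly two
eigenvalues `l ≠ l⁻¹` in `F`, with `l ^ n = 1`, and the matrices with trace `l + l⁻¹ ∈ K` are easily
counted. This produces the greatest common divisors of `n` with `k - 1` and `k + 1`, where
`k = |K|`. If `q = k ^ m`, then `k - 1` divides `q - 1`, while `k + 1` is coprime to `q - 1` if
`m` is odd and divides `q - 1` if `m` is even.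
-/

open Matrix

namespace HermitianOrbits

open Finset

/-! ### Finite fields -/

lemma card_sub_one_eq {α : Type*} [Fintype α] {q : ℕ} (hα : Fintype.card α = q ^ 2) :
    Fintype.card α - 1 = (q + 1) * (q - 1) := by
  simpa [hα] using Nat.sq_sub_sq q 1

lemma add_one_dvd_card_sub_one {α : Type*} [Fintype α] {q : ℕ} (hα : Fintype.card α = q ^ 2) :
    q + 1 ∣ Fintype.card α - 1 :=
  ⟨_, card_sub_one_eq hα⟩

lemma sub_one_dvd_card_sub_one {α : Type*} [Fintype α] {q : ℕ} (hα : Fintype.card α = q ^ 2) :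
    q - 1 ∣ Fintype.card α - 1 :=
  ⟨_, (card_sub_one_eq hα).trans (mul_comm _ _)⟩

lemma pow_sub_one_eq_one_iff {F : Type*} [Field F] {q : ℕ} (hq : 0 < q) {x : F} (hx : x ≠ 0) :
    x ^ (q - 1) = 1 ↔ x ^ q = x := by
  obtain ⟨m, rfl⟩ := Nat.exists_eq_add_of_lt hq
  simp [pow_succ, hx]

section FiniteField

variable {F : Type*} [Field F] [Fintype F] {n q : ℕ}

lemma exists_isPrimitiveRoot (hn : n ∣ Fintype.card F - 1) : ∃ ζ : F, IsPrimitiveRoot ζ n := by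
  obtain ⟨g, hg⟩ := IsCyclic.exists_ofOrder_eq_natCard (α := Fˣ)
  obtain ⟨m, hm⟩ := hn
  have horder : orderOf (g : F) = n * m := by
    rw [orderOf_units, hg, Nat.card_units, Nat.card_eq_fintype_card, hm]
  have hpos : 0 < n * m := hm ▸ Nat.sub_pos_of_lt Fintype.one_lt_card
  exact ⟨(g : F) ^ m, (IsPrimitiveRoot.orderOf (g : F)).pow (horder ▸ hpos)
    (by rw [horder, mul_comm])⟩

lemma pos_of_dvd_card_sub_one (hn : n ∣ Fintype.card F - 1) : 0 < n :=
  Nat.pos_of_dvd_of_pos hn (Nat.sub_pos_of_lt Fintype.one_lt_card)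

lemma card_pow_eq_one [DecidableEq F] (hn : n ∣ Fintype.card F - 1) : #{x : F | x ^ n = 1} = n := by
  obtain ⟨ζ, hζ⟩ := exists_isPrimitiveRoot hn
  convert hζ.card_nthRootsFinset using 2
  ext x
  simp [Polynomial.mem_nthRootsFinset (pos_of_dvd_card_sub_one hn)]

lemma card_rootsOfUnity_eq (hn : n ∣ Fintype.card F - 1) : Nat.card (rootsOfUnity n F) = n := by
  obtain ⟨ζ, hζ⟩ := exists_isPrimitiveRoot hn
  have : NeZero n := ⟨(pos_of_dvd_card_sub_one hn).ne'⟩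
  exact hζ.card_rootsOfUnity

lemma one_lt_of_card_eq_sq (hF : Fintype.card F = q ^ 2) : 1 < q := by
  have hcard : 1 < Fintype.card F := Fintype.one_lt_card
  by_contra! hq
  interval_cases q <;> omega

lemma even_of_card_eq_sq [CharP F 2] (hF : Fintype.card F = q ^ 2) : Even q := by
  have heven := FiniteField.even_card_of_char_two (ringChar.eq F 2)
  rw [hF] at heven
  exact (Nat.even_pow.1 (Nat.even_iff.2 heven)).1

lemma odd_sub_one_of_card_eq_sq [CharP F 2] (hF : Fintype.card F = q ^ 2) : Odd (q - 1) :=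
  Nat.Even.sub_odd (one_lt_of_card_eq_sq hF).le (even_of_card_eq_sq hF) odd_one

lemma card_pow_eq_one_ne_one [DecidableEq F] (hn : n ∣ Fintype.card F - 1) (m : ℕ) :
    #{l : F | (l ^ n = 1 ∧ l ≠ 1) ∧ l ^ m = 1} = n.gcd m - 1 := by
  have herase : ({l : F | (l ^ n = 1 ∧ l ≠ 1) ∧ l ^ m = 1} : Finset F)
      = ({l : F | l ^ n.gcd m = 1} : Finset F).erase 1 := by
    ext l
    simp only [mem_filter, mem_univ, true_and, mem_erase, pow_gcd_eq_one]
    tauto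
  rw [herase, card_erase_of_mem (by simp), card_pow_eq_one ((Nat.gcd_dvd_left _ _).trans hn)]

lemma pow_pow_of_card_eq_sq (hF : Fintype.card F = q ^ 2) (x : F) : (x ^ q) ^ q = x := by
  rw [← pow_mul, ← sq, ← hF, FiniteField.pow_card]

lemma exists_eq_prime_pow (hF : Fintype.card F = q ^ 2) :
    ∃ p n : ℕ, p.Prime ∧ CharP F p ∧ q = p ^ n := by
  obtain ⟨p, hchar, n, hp, hcard⟩ := FiniteField.card' F
  have hdvd : q ∣ p ^ (n : ℕ) := hcard ▸ hF ▸ Dvd.intro_left q (sq q).symm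
  obtain ⟨m, -, hq⟩ := (Nat.dvd_prime_pow hp).1 hdvd
  exact ⟨p, m, hp, hchar, hq⟩

lemma add_pow_of_card_eq_sq (hF : Fintype.card F = q ^ 2) (x y : F) :
    (x + y) ^ q = x ^ q + y ^ q := by
  obtain ⟨p, n, hp, hchar, rfl⟩ := exists_eq_prime_pow hF
  have := Fact.mk hp
  exact add_pow_char_pow x y p n

lemma sub_pow_of_card_eq_sq (hF : Fintype.card F = q ^ 2) (x y : F) :
    (x - y) ^ q = x ^ q - y ^ q := by
  obtain ⟨p, n, hp, hchar, rfl⟩ := exists_eq_prime_pow hF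
  have := Fact.mk hp
  exact sub_pow_char_pow x y n

lemma exists_pow_add_one_eq (hF : Fintype.card F = q ^ 2) {b : F} (hb0 : b ≠ 0) (hb : b ^ q = b) :
    ∃ x : F, x ^ (q + 1) = b := by
  have hq := one_lt_of_card_eq_sq hF
  obtain ⟨ζ, hζ⟩ := exists_isPrimitiveRoot (F := F) dvd_rfl
  have : NeZero (Fintype.card F - 1) := ⟨(pos_of_dvd_card_sub_one (F := F) dvd_rfl).ne'⟩
  obtain ⟨i, -, hi⟩ := hζ.eq_pow_of_pow_eq_one (FiniteField.pow_card_sub_one_eq_one b hb0)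
  have hdvd : (q + 1) * (q - 1) ∣ i * (q - 1) := by
    rw [← card_sub_one_eq hF,
      ← hζ.pow_eq_one_iff_dvd, pow_mul, hi, (pow_sub_one_eq_one_iff (by omega) hb0).2 hb]
  obtain ⟨j, rfl⟩ := Nat.dvd_of_mul_dvd_mul_right (by omega) hdvd
  exact ⟨ζ ^ j, by rw [← hi, ← pow_mul, mul_comm]⟩

lemma card_pow_add_one_eq [DecidableEq F] (hF : Fintype.card F = q ^ 2) {b : F} (hb0 : b ≠ 0)
    (hb : b ^ q = b) : #{x : F | x ^ (q + 1) = b} = q + 1 := by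
  obtain ⟨y, hy⟩ := exists_pow_add_one_eq hF hb0 hb
  have hy0 : y ≠ 0 := by rintro rfl; exact hb0 (by simp [← hy])
  refine Eq.trans ?_ (card_pow_eq_one (F := F) (add_one_dvd_card_sub_one hF))
  refine card_nbij' (· / y) (· * y) ?_ ?_ ?_ ?_ <;> intro x hx
  · simp_all [div_pow]
  · simp_all [mul_pow]
  · simp [hy0]
  · simp [hy0]

end FiniteField

lemma mem_range_algebraMap_iff_pow_card_eq {K F : Type*} [Field K] [Fintype K] [Field F]
    [Algebra K F] {y : F} :
    y ∈ Set.range (algebraMap K F) ↔ y ^ Fintype.card K = y := by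
  classical
  have hcard : 1 < Fintype.card K := Fintype.one_lt_card
  have hne := FiniteField.X_pow_card_sub_X_ne_zero F hcard
  have hroots : (univ.image (algebraMap K F))
      = (Polynomial.X ^ Fintype.card K - Polynomial.X : Polynomial F).roots.toFinset := by
    refine eq_of_subset_of_card_le (fun z hz => ?_) ?_
    · obtain ⟨x, -, rfl⟩ := mem_image.1 hz
      simp [Polynomial.mem_roots hne, ← map_pow, FiniteField.pow_card]
    · rw [card_image_of_injective _ (algebraMap K F).injective, card_univ]
      exact (Multiset.toFinset_card_le _).trans ((Polynomial.card_roots' _).trans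
        (FiniteField.X_pow_card_sub_X_natDegree_eq F hcard).le)
  have hy := congrArg (y ∈ ·) hroots
  simpa [Polynomial.mem_roots hne, sub_eq_zero] using hy

/-! ### Eigenvalues and torsion in `SL(2, F)` -/

open scoped MatrixGroups

/-- The trace of an element of `SL(2, R)`. -/
def tr {R : Type*} [CommRing R] (A : SL(2, R)) : R :=
  (A : Matrix (Fin 2) (Fin 2) R).trace

lemma tr_eq {R : Type*} [CommRing R] (A : SL(2, R)) : tr A = A 0 0 + A 1 1 :=
  trace_fin_two _

lemma tr_map {R S : Type*} [CommRing R] [CommRing S] (f : R →+* S) (A : SL(2, R)) :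
    tr (SpecialLinearGroup.map f A) = f (tr A) := by
  simp [tr_eq]

lemma specialLinearGroup_map_injective {R S : Type*} [CommRing R] [CommRing S] {f : R →+* S}
    (hf : Function.Injective f) :
    Function.Injective (SpecialLinearGroup.map f : SL(2, R) →* SL(2, S)) := by
  intro A B hAB
  ext i j
  exact hf (congrArg (fun M : SL(2, S) => M i j) hAB)

lemma sq_ne_one_of_odd_pow_eq_one {M : Type*} [Monoid M] {n : ℕ} (hn : Odd n) {x : M}
    (hxn : x ^ n = 1) (hx : x ≠ 1) : x ^ 2 ≠ 1 := fun hx2 => by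
  have hgcd := pow_gcd_eq_one.2 ⟨hxn, hx2⟩
  rw [Nat.coprime_two_right.2 hn, pow_one] at hgcd
  exact hx hgcd

section Field

variable {F : Type*} [Field F] {n : ℕ}

lemma ne_inv_of_sq_ne_one {x : F} (hx0 : x ≠ 0) (hx : x ^ 2 ≠ 1) : x ≠ x⁻¹ := fun h =>
  hx (by rw [sq, mul_eq_one_iff_eq_inv₀ hx0, ← h])

lemma add_inv_eq_add_inv_iff {x y : F} (hx : x ≠ 0) (hy : y ≠ 0) :
    x + x⁻¹ = y + y⁻¹ ↔ x = y ∨ x = y⁻¹ := by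
  have hfactor : x + x⁻¹ - (y + y⁻¹) = (x - y) * (x - y⁻¹) * x⁻¹ := by
    field_simp
    ring
  rw [← sub_eq_zero, hfactor, mul_eq_zero, mul_eq_zero, sub_eq_zero, sub_eq_zero]
  simp [hx]

lemma mul_sub_mul_eq_one (A : SL(2, F)) : A 0 0 * A 1 1 - A 0 1 * A 1 0 = 1 := by
  rw [← det_fin_two, A.det_coe]

/-- By Cayley–Hamilton, `A ^ 2 = tr A • A - 1`. -/
lemma sq_eq_one_iff_tr_eq_zero [CharP F 2] {A : SL(2, F)} : A ^ 2 = 1 ↔ tr A = 0 := by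
  have hCH : (A : Matrix (Fin 2) (Fin 2) F) ^ 2 - tr A • (A : Matrix (Fin 2) (Fin 2) F) + 1
      = 0 := by
    simpa [charpoly_fin_two, tr, Algebra.smul_def] using
      aeval_self_charpoly (A : Matrix (Fin 2) (Fin 2) F)
  have hA : (A : Matrix (Fin 2) (Fin 2) F) ≠ 0 := by
    intro h
    simpa [h] using A.det_coe
  have htwo : (1 : Matrix (Fin 2) (Fin 2) F) + 1 = 0 := CharTwo.add_self_eq_zero 1
  have hsub : (A : Matrix (Fin 2) (Fin 2) F) ^ 2 - 1 = tr A • (A : Matrix (Fin 2) (Fin 2) F) := by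
    linear_combination (norm := noncomm_ring) hCH - htwo
  have hcoe : A ^ 2 = 1 ↔ (A : Matrix (Fin 2) (Fin 2) F) ^ 2 = 1 := Subtype.ext_iff
  rw [hcoe, ← sub_eq_zero, hsub, smul_eq_zero_iff_left hA]

lemma charpoly_isRoot_iff (A : SL(2, F)) {l : F} (hl : l ≠ 0) :
    (A : Matrix (Fin 2) (Fin 2) F).charpoly.IsRoot l ↔ tr A = l + l⁻¹ := by
  rw [charpoly_fin_two, A.det_coe, ← tr, Polynomial.IsRoot.def]
  simp only [Polynomial.eval_add, Polynomial.eval_sub, Polynomial.eval_pow, Polynomial.eval_X,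
    Polynomial.eval_mul, Polynomial.eval_C]
  constructor <;> intro h
  · field_simp
    linear_combination -h
  · rw [h]
    field_simp
    ring

/-- The characteristic polynomial of `A` is then `(X - l) (X - l⁻¹)`, which divides `X ^ n - 1`. -/
lemma pow_eq_one_of_tr_eq {A : SL(2, F)} {l : F} (hln : l ^ n = 1) (hl0 : l ≠ 0)
    (hl : l ^ 2 ≠ 1) (htr : tr A = l + l⁻¹) : A ^ n = 1 := by
  have hcharpoly : (A : Matrix (Fin 2) (Fin 2) F).charpoly
      = (Polynomial.X - Polynomial.C l) * (Polynomial.X - Polynomial.C l⁻¹) := by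
    have hmul : Polynomial.C l * Polynomial.C l⁻¹ = 1 := by
      rw [← Polynomial.C_mul, mul_inv_cancel₀ hl0, Polynomial.C_1]
    rw [charpoly_fin_two, A.det_coe, ← tr, htr, Polynomial.C_add, Polynomial.C_1]
    linear_combination -hmul
  have hdvd : (A : Matrix (Fin 2) (Fin 2) F).charpoly ∣ Polynomial.X ^ n - 1 := by
    rw [hcharpoly]
    refine IsCoprime.mul_dvd (Polynomial.isCoprime_X_sub_C_of_isUnit_sub ?_) ?_ ?_
    · exact (sub_ne_zero.2 (ne_inv_of_sq_ne_one hl0 hl)).isUnit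
    · simp [Polynomial.dvd_iff_isRoot, hln]
    · simp [Polynomial.dvd_iff_isRoot, hln]
  have hzero := Polynomial.aeval_eq_zero_of_dvd_aeval_eq_zero hdvd (aeval_self_charpoly _)
  refine Subtype.ext ?_
  simpa [sub_eq_zero] using hzero

/-- Otherwise the characteristic polynomial of `M` is coprime to `(X ^ n - 1) / (X - 1)`; but both
annihilate the range of `M - 1`. -/
lemma exists_charpoly_isRoot_of_pow_eq_one {ι : Type*} [Fintype ι] [DecidableEq ι]
    {M : Matrix ι ι F} {ζ : F} (hζ : IsPrimitiveRoot ζ n) (hn : 0 < n) (hMn : M ^ n = 1)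
    (hM : M ≠ 1) : ∃ l : F, l ^ n = 1 ∧ l ≠ 1 ∧ M.charpoly.IsRoot l := by
  classical
  by_contra! hno
  set Q : Polynomial F :=
    ∏ l ∈ (Polynomial.nthRootsFinset n (1 : F)).erase 1, (Polynomial.X - Polynomial.C l)
  have hfactor : (Polynomial.X - Polynomial.C 1) * Q = Polynomial.X ^ n - 1 := by
    rw [mul_prod_erase _ (fun l => Polynomial.X - Polynomial.C l)
      ((Polynomial.mem_nthRootsFinset hn 1).2 (one_pow n)),
      ← Polynomial.X_pow_sub_one_eq_prod hn hζ]
  have hQ : (M - 1) * Polynomial.aeval M Q = 0 := by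
    simpa [hMn] using congrArg (Polynomial.aeval M) hfactor
  have hcoprime : IsCoprime M.charpoly Q := by
    refine IsCoprime.prod_right fun l hl => ?_
    rw [mem_erase, Polynomial.mem_nthRootsFinset hn] at hl
    rw [isCoprime_comm, (Polynomial.irreducible_X_sub_C l).coprime_iff_not_dvd,
      Polynomial.dvd_iff_isRoot]
    exact hno l hl.2 hl.1
  obtain ⟨u, v, huv⟩ := hcoprime
  have hone := congrArg (fun P => (M - 1) * Polynomial.aeval M P) huv
  simp only [mul_comm v, map_add, map_mul, aeval_self_charpoly, mul_zero, zero_add, ← mul_assoc, hQ,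
    zero_mul, map_one, mul_one] at hone
  exact hM (sub_eq_zero.1 hone.symm)

lemma card_eigenvalues_eq [Fintype F] [DecidableEq F] (hn : n ∣ Fintype.card F - 1) (hodd : Odd n)
    (A : SL(2, F)) :
    #{l : F | (l ^ n = 1 ∧ l ≠ 1) ∧ tr A = l + l⁻¹} = if A ≠ 1 ∧ A ^ n = 1 then 2 else 0 := by
  have hne : ∀ l : F, l ^ n = 1 → l ≠ 0 := fun l hl => by
    rintro rfl
    simp [hodd.pos.ne'] at hl
  split_ifs with hA
  · obtain ⟨ζ, hζ⟩ := exists_isPrimitiveRoot hn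
    obtain ⟨l, hln, hl1, hroot⟩ := exists_charpoly_isRoot_of_pow_eq_one hζ hodd.pos
      (M := (A : Matrix (Fin 2) (Fin 2) F)) (by simpa using congrArg Subtype.val hA.2)
      (fun h => hA.1 (Subtype.ext h))
    have hl0 := hne l hln
    have htr := (charpoly_isRoot_iff A hl0).1 hroot
    rw [← card_pair (ne_inv_of_sq_ne_one hl0 (sq_ne_one_of_odd_pow_eq_one hodd hln hl1))]
    congr 1
    ext x
    simp only [mem_filter, mem_univ, true_and, mem_insert, mem_singleton]
    constructor
    · rintro ⟨⟨hxn, -⟩, hx⟩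
      exact (add_inv_eq_add_inv_iff (hne x hxn) hl0).1 (hx.symm.trans htr)
    · rintro (rfl | rfl)
      · exact ⟨⟨hln, hl1⟩, htr⟩
      · exact ⟨⟨by simp [hln], by simpa using hl1⟩, by rw [htr, inv_inv, add_comm]⟩
  · rw [card_eq_zero, filter_eq_empty_iff]
    rintro l - ⟨⟨hln, hl1⟩, htr⟩
    refine hA ⟨?_, pow_eq_one_of_tr_eq hln (hne l hln)
      (sq_ne_one_of_odd_pow_eq_one hodd hln hl1) htr⟩
    rintro rfl
    have h := (add_inv_eq_add_inv_iff (hne l hln) one_ne_zero).1 (by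
      rw [← htr]
      simp [tr_eq])
    simp [hl1] at h

end Field

/-! ### Counting in `SL(2, K)` -/

section Count

variable {K : Type*} [Field K] [Fintype K] [DecidableEq K]

lemma card_mul_eq (d : K) : #{p : K × K | p.1 * p.2 = d} =
    (Fintype.card K - 1) + if d = 0 then Fintype.card K else 0 := by
  have hfiber : ∀ b ∈ univ.erase (0 : K), #{c : K | b * c = d} = 1 := by
    intro b hb
    refine card_eq_one.2 ⟨d / b, ?_⟩
    ext c
    simp [eq_div_iff (ne_of_mem_erase hb), mul_comm b]
  have hsum : #{p : K × K | p.1 * p.2 = d} = ∑ b : K, #{c : K | b * c = d} := by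
    simp only [card_filter, Fintype.sum_prod_type]
  rw [hsum, ← sum_erase_add _ _ (mem_univ (0 : K)), sum_congr rfl hfiber]
  by_cases hd : d = 0
  · simp [hd]
  · simp [hd, Ne.symm hd]

/-- A matrix of trace `t` is given by its upper left entry `x` and by two off-diagonal entries with
product `x * (t - x) - 1`. -/
lemma card_tr_eq (t : K) : #{A : SL(2, K) | tr A = t} =
    Fintype.card K * (Fintype.card K - 1) + Fintype.card K * #{x : K | x * (t - x) = 1} := by
  have hbij : #{A : SL(2, K) | tr A = t}
      = #(univ.sigma fun x : K => ({p | p.1 * p.2 = x * (t - x) - 1} : Finset (K × K))) := by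
    refine card_bij (fun A _ => ⟨A 0 0, A 0 1, A 1 0⟩) ?_ ?_ ?_
    · intro A hA
      simp only [tr_eq, mem_filter, mem_univ, true_and] at hA
      simp only [mem_sigma, mem_univ, mem_filter, true_and, ← hA]
      linear_combination -mul_sub_mul_eq_one A
    · intro A hA B hB hAB
      simp only [tr_eq, mem_filter, mem_univ, true_and] at hA hB
      simp only [Sigma.mk.injEq, heq_eq_eq, Prod.mk.injEq] at hAB
      ext i j
      fin_cases i <;> fin_cases j
      exacts [hAB.1, hAB.2.1, hAB.2.2, (by linear_combination hA - hB - hAB.1 : A 1 1 = B 1 1)]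
    · rintro ⟨x, b, c⟩ hx
      simp only [mem_sigma, mem_univ, mem_filter, true_and] at hx
      obtain ⟨A, hA⟩ : ∃ A : SL(2, K), (A : Matrix (Fin 2) (Fin 2) K) = !![x, b; c, t - x] :=
        ⟨⟨_, by rw [det_fin_two_of, hx]; ring⟩, rfl⟩
      exact ⟨A, by simp [tr_eq, hA], by simp [hA]⟩
  simp only [hbij, card_sigma, card_mul_eq, sum_add_distrib, ← sum_filter, sum_const, card_univ,
    smul_eq_mul, sub_eq_zero, mul_comm (Fintype.card K)]

lemma card_specialLinearGroup_two :
    Fintype.card SL(2, K) = Fintype.card K * (Fintype.card K - 1) * (Fintype.card K + 1) := by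
  have hfiber : ∀ x : K, #{t : K | x * (t - x) = 1} = if x ≠ 0 then 1 else 0 := by
    intro x
    split_ifs with hx
    · refine card_eq_one.2 ⟨x⁻¹ + x, ?_⟩
      ext t
      simp [← sub_eq_iff_eq_add, mul_eq_one_iff_inv_eq₀ hx, eq_comm]
    · simp [not_not.1 hx]
  have hsum : ∑ t : K, #{x : K | x * (t - x) = 1} = Fintype.card K - 1 := by
    simp only [card_filter]
    rw [sum_comm]
    simp only [← card_filter, hfiber]
    simp [filter_ne']
  calc Fintype.card SL(2, K) = ∑ t : K, #{A : SL(2, K) | tr A = t} := by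
        rw [← card_univ, card_eq_sum_card_fiberwise (t := univ) (f := tr) (by simp)]
    _ = _ := by
        simp only [card_tr_eq, sum_add_distrib, sum_const, card_univ, smul_eq_mul, ← mul_sum, hsum]
        ring

lemma card_ne_one_sq_eq_one [CharP K 2] :
    #{A : SL(2, K) | A ≠ 1 ∧ A ^ 2 = 1} = Fintype.card K ^ 2 - 1 := by
  have hroot : ({x : K | x * (0 - x) = 1} : Finset K) = {1} := by
    ext x
    simp only [mem_filter, mem_univ, true_and, mem_singleton]
    rw [zero_sub, CharTwo.neg_eq, ← sq]
    simpa only [one_pow] using CharTwo.sq_inj (x := x) (y := 1)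
  have herase : ({A : SL(2, K) | A ≠ 1 ∧ A ^ 2 = 1} : Finset _)
      = ({A : SL(2, K) | tr A = 0} : Finset _).erase 1 := by
    ext A
    simp [sq_eq_one_iff_tr_eq_zero]
  have hcard : 1 ≤ Fintype.card K := Fintype.card_pos
  rw [herase, card_erase_of_mem (by simp [tr_eq, CharTwo.add_self_eq_zero]), card_tr_eq, hroot,
    card_singleton]
  congr 1
  zify [hcard]
  ring

end Count

section Extension

variable {K F : Type*} [Field K] [Fintype K] [Field F] [Algebra K F]

lemma add_inv_mem_range_algebraMap_iff {l : F} (hl0 : l ≠ 0) :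
    l + l⁻¹ ∈ Set.range (algebraMap K F) ↔ l ^ Fintype.card K = l ∨ l ^ Fintype.card K = l⁻¹ := by
  have hfrob : (l + l⁻¹) ^ Fintype.card K = l ^ Fintype.card K + (l ^ Fintype.card K)⁻¹ := by
    rw [← inv_pow]
    exact map_add (FiniteField.frobeniusAlgHom K F) l l⁻¹
  rw [mem_range_algebraMap_iff_pow_card_eq, hfrob,
    add_inv_eq_add_inv_iff (pow_ne_zero _ hl0) hl0]

variable [DecidableEq K]

lemma card_mul_sub_eq_one [DecidableEq F] {l : F} (hl0 : l ≠ 0) (hl : l ^ 2 ≠ 1) {t : K}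
    (ht : algebraMap K F t = l + l⁻¹) :
    #{x : K | x * (t - x) = 1} = if l ^ Fintype.card K = l then 2 else 0 := by
  have hroot : ∀ x : K, x * (t - x) = 1 ↔ algebraMap K F x = l ∨ algebraMap K F x = l⁻¹ := by
    intro x
    have hfactor : algebraMap K F (x * (t - x) - 1)
        = -((algebraMap K F x - l) * (algebraMap K F x - l⁻¹)) := by
      simp only [map_sub, map_mul, map_one, ht]
      linear_combination mul_inv_cancel₀ hl0
    rw [← sub_eq_zero, ← map_eq_zero (algebraMap K F), hfactor, neg_eq_zero, mul_eq_zero,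
      sub_eq_zero, sub_eq_zero]
  simp only [hroot]
  split_ifs with hfix
  · obtain ⟨x, rfl⟩ := mem_range_algebraMap_iff_pow_card_eq.2 hfix
    have hx : x ≠ x⁻¹ := ne_inv_of_sq_ne_one (by simpa using hl0) (by simpa [← map_pow] using hl)
    rw [← card_pair hx]
    congr 1
    ext y
    simp [← map_inv₀]
  · rw [card_eq_zero, filter_eq_empty_iff]
    rintro x - (rfl | hx)
    · exact hfix (mem_range_algebraMap_iff_pow_card_eq.1 ⟨x, rfl⟩)
    · exact hfix (mem_range_algebraMap_iff_pow_card_eq.1 ⟨x⁻¹, by rw [map_inv₀, hx, inv_inv]⟩)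

lemma card_algebraMap_tr_eq [DecidableEq F] {l : F} (hl0 : l ≠ 0) (hl : l ^ 2 ≠ 1) :
    #{A : SL(2, K) | algebraMap K F (tr A) = l + l⁻¹} =
      (if l ^ (Fintype.card K - 1) = 1 then Fintype.card K * (Fintype.card K + 1) else 0)
        + (if l ^ (Fintype.card K + 1) = 1 then Fintype.card K * (Fintype.card K - 1) else 0) := by
  have hcard : 1 ≤ Fintype.card K := Fintype.card_pos
  have hne := ne_inv_of_sq_ne_one hl0 hl
  simp only [pow_sub_one_eq_one_iff hcard hl0, pow_succ, mul_eq_one_iff_eq_inv₀ hl0]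
  by_cases hmem : l + l⁻¹ ∈ Set.range (algebraMap K F)
  · obtain ⟨t, ht⟩ := hmem
    simp only [← ht, (algebraMap K F).injective.eq_iff, card_tr_eq, card_mul_sub_eq_one hl0 hl ht]
    rcases (add_inv_mem_range_algebraMap_iff hl0).1 ⟨t, ht⟩ with hfix | hinv
    · simp only [hfix, if_true, hne, if_false]
      zify [hcard]
      ring
    · simp [hinv, hne.symm]
  · obtain ⟨hfix, hinv⟩ := not_or.1 (mt (add_inv_mem_range_algebraMap_iff hl0).2 hmem)
    rw [if_neg hfix, if_neg hinv, card_eq_zero, filter_eq_empty_iff]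
    exact fun A _ hA => hmem ⟨_, hA⟩

/-- Double count of the pairs `(A, l)` where `l ≠ 1` is an eigenvalue of `A` in `F` with
`l ^ n = 1`. -/
lemma two_mul_card_torsion [Fintype F] {n : ℕ} (hn : n ∣ Fintype.card F - 1) (hodd : Odd n) :
    2 * #{A : SL(2, K) | A ≠ 1 ∧ A ^ n = 1} =
      (n.gcd (Fintype.card K - 1) - 1) * (Fintype.card K * (Fintype.card K + 1))
        + (n.gcd (Fintype.card K + 1) - 1) * (Fintype.card K * (Fintype.card K - 1)) := by
  classical
  have heigen : ∀ A : SL(2, K), #{l : F | (l ^ n = 1 ∧ l ≠ 1) ∧ algebraMap K F (tr A) = l + l⁻¹}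
      = if A ≠ 1 ∧ A ^ n = 1 then 2 else 0 := by
    intro A
    have hinj := specialLinearGroup_map_injective (algebraMap K F).injective
    simpa only [tr_map, ← map_pow, ne_eq, map_eq_one_iff _ hinj] using
      card_eigenvalues_eq hn hodd (SpecialLinearGroup.map (algebraMap K F) A)
  have hmatrix : ∀ l ∈ ({l : F | l ^ n = 1 ∧ l ≠ 1} : Finset F),
      #{A : SL(2, K) | algebraMap K F (tr A) = l + l⁻¹} = _ := fun l hl => by
    simp only [mem_filter, mem_univ, true_and] at hl
    refine card_algebraMap_tr_eq (K := K) ?_ (sq_ne_one_of_odd_pow_eq_one hodd hl.1 hl.2)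
    rintro rfl
    simp [hodd.pos.ne'] at hl
  calc 2 * #{A : SL(2, K) | A ≠ 1 ∧ A ^ n = 1}
      = ∑ A : SL(2, K),
          #{l : F | (l ^ n = 1 ∧ l ≠ 1) ∧ algebraMap K F (tr A) = l + l⁻¹} := by
        simp only [heigen, ← sum_filter, sum_const, smul_eq_mul, mul_comm]
    _ = ∑ l ∈ ({l : F | l ^ n = 1 ∧ l ≠ 1} : Finset F),
          #{A : SL(2, K) | algebraMap K F (tr A) = l + l⁻¹} := by
        simp only [← filter_filter]
        exact sum_card_bipartiteAbove_eq_sum_card_bipartiteBelow _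
    _ = _ := by
        simp only [sum_congr rfl hmatrix, sum_add_distrib, ← sum_filter, filter_filter,
          sum_const, card_pow_eq_one_ne_one hn, smul_eq_mul]

end Extension

/-! ### The unitary group and its eigenvectors -/

/-- The Hermitian form `x ^ (q + 1) - y ^ (q + 1)` on `F²`, where `F` has `q²` elements and
`x ↦ x ^ q` plays the role of complex conjugation. -/
def hermForm {F : Type*} [Field F] (q : ℕ) (v : Fin 2 → F) : F :=
  v 0 ^ (q + 1) - v 1 ^ (q + 1)

/-- The special unitary group of `hermForm`, written in coordinates like `SU(1, 1)`. -/
def specialUnitary (q : ℕ) (F : Type*) [Field F] : Set SL(2, F) :=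
  {B | B 0 1 = B 1 0 ^ q ∧ B 1 1 = B 0 0 ^ q}

section Unitary

variable {F : Type*} [Field F] {q : ℕ}

lemma hermForm_smul (k : F) (v : Fin 2 → F) :
    hermForm q (k • v) = k ^ (q + 1) * hermForm q v := by
  simp only [hermForm, Pi.smul_apply, smul_eq_mul]
  ring

lemma pow_eq_inv_of_pow_add_one_eq_one {l : F} (hl : l ^ (q + 1) = 1) : l ^ q = l⁻¹ :=
  eq_inv_of_mul_eq_one_left (by rw [← pow_succ, hl])

lemma mulVec_eq_smul_iff {M : Matrix (Fin 2) (Fin 2) F} {v : Fin 2 → F} {l : F} :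
    M *ᵥ v = l • v ↔
      M 0 0 * v 0 + M 0 1 * v 1 = l * v 0 ∧ M 1 0 * v 0 + M 1 1 * v 1 = l * v 1 := by
  simp [funext_iff, Fin.forall_fin_two]

lemma exists_mulVec_eq_smul {B : SL(2, F)} {l : F} (hl0 : l ≠ 0) (htr : tr B = l + l⁻¹) :
    ∃ v ≠ 0, (B : Matrix (Fin 2) (Fin 2) F) *ᵥ v = l • v := by
  have hroot := (charpoly_isRoot_iff B hl0).2 htr
  rw [Polynomial.IsRoot.def, eval_charpoly, ← exists_mulVec_eq_zero_iff] at hroot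
  obtain ⟨v, hv, hlv⟩ := hroot
  refine ⟨v, hv, ?_⟩
  rw [sub_mulVec, scalar_apply, ← smul_one_eq_diagonal, smul_mulVec, one_mulVec,
    sub_eq_zero] at hlv
  exact hlv.symm

lemma smul_eq_of_mulVec_eq_smul {B : SL(2, F)} {l : F} (hl : l ^ 2 ≠ 1) {v w : Fin 2 → F}
    (hv : hermForm q v = 1) (hBv : (B : Matrix (Fin 2) (Fin 2) F) *ᵥ v = l • v)
    (hBw : (B : Matrix (Fin 2) (Fin 2) F) *ᵥ w = l • w) :
    (w 0 * v 0 ^ q - w 1 * v 1 ^ q) • v = w := by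
  rw [mulVec_eq_smul_iff] at hBv hBw
  have hdet := mul_sub_mul_eq_one B
  have hprop : v 0 * w 1 - v 1 * w 0 = 0 := by
    refine (mul_eq_zero.1 ?_).resolve_left (sub_ne_zero.2 hl)
    linear_combination (v 0 * w 1 - v 1 * w 0) * hdet
      - (B 1 0 * w 0 + B 1 1 * w 1) * hBv.1 - l * v 0 * hBw.2
      + (B 0 0 * w 0 + B 0 1 * w 1) * hBv.2 + l * v 1 * hBw.1
  rw [hermForm] at hv
  ext i
  fin_cases i
  · change (w 0 * v 0 ^ q - w 1 * v 1 ^ q) * v 0 = w 0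
    linear_combination w 0 * hv - v 1 ^ q * hprop
  · change (w 0 * v 0 ^ q - w 1 * v 1 ^ q) * v 1 = w 1
    linear_combination w 1 * hv - v 0 ^ q * hprop

lemma denom_ne_zero_of_fixed {B : SL(2, F)} {x : F}
    (hx : B 0 0 * x + B 0 1 = x * (B 1 0 * x + B 1 1)) : B 1 0 * x + B 1 1 ≠ 0 := by
  intro h
  have hdet := mul_sub_mul_eq_one B
  rw [h, mul_zero] at hx
  exact one_ne_zero (by linear_combination B 0 0 * h - B 1 0 * hx - hdet)

lemma fixed_iff_tr_eq {B : SL(2, F)} (hc : B 1 0 ≠ 0) {x : F} (hl : B 1 0 * x + B 1 1 ≠ 0) :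
    B 0 0 * x + B 0 1 = x * (B 1 0 * x + B 1 1)
      ↔ tr B = (B 1 0 * x + B 1 1) + (B 1 0 * x + B 1 1)⁻¹ := by
  rw [← sub_eq_iff_eq_add', ← mul_eq_one_iff_eq_inv₀ hl, ← sub_eq_zero, ← sub_eq_zero (b := 1),
    ← mul_eq_zero_iff_left hc, tr_eq]
  refine Eq.congr_left ?_
  linear_combination -mul_sub_mul_eq_one B

variable [Fintype F]

lemma hermForm_pow (hF : Fintype.card F = q ^ 2) (v : Fin 2 → F) :
    hermForm q v ^ q = hermForm q v := by
  simp only [hermForm, sub_pow_of_card_eq_sq hF, pow_succ, mul_pow, pow_pow_of_card_eq_sq hF,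
    mul_comm]

/-- Conjugating `B v = l v` shows that `(ȳ, x̄)` is an eigenvector for `l̄` if `v = (x, y)`. -/
lemma conj_mulVec_eq_smul (hF : Fintype.card F = q ^ 2) {B : SL(2, F)}
    (hB : B ∈ specialUnitary q F) {l : F} {v : Fin 2 → F}
    (hv : (B : Matrix (Fin 2) (Fin 2) F) *ᵥ v = l • v) :
    (B : Matrix (Fin 2) (Fin 2) F) *ᵥ ![v 1 ^ q, v 0 ^ q] = l ^ q • ![v 1 ^ q, v 0 ^ q] := by
  rw [mulVec_eq_smul_iff] at hv ⊢
  have h0 := congrArg (· ^ q) hv.1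
  have h1 := congrArg (· ^ q) hv.2
  simp only [add_pow_of_card_eq_sq hF, mul_pow, hB.1, hB.2, pow_pow_of_card_eq_sq hF,
    cons_val_zero, cons_val_one] at h0 h1 ⊢
  exact ⟨by linear_combination h1, by linear_combination h0⟩

lemma exists_hermForm_eq_one (hF : Fintype.card F = q ^ 2) {B : SL(2, F)}
    (hB : B ∈ specialUnitary q F) {l : F} (hlq : l ^ (q + 1) = 1) (hl : l ^ 2 ≠ 1)
    (htr : tr B = l + l⁻¹) :
    ∃ v, hermForm q v = 1 ∧ (B : Matrix (Fin 2) (Fin 2) F) *ᵥ v = l • v := by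
  have hl0 : l ≠ 0 := by rintro rfl; simp at hlq
  have hconj : l ^ q = l⁻¹ := pow_eq_inv_of_pow_add_one_eq_one hlq
  obtain ⟨v, hv0, hv⟩ := exists_mulVec_eq_smul hl0 htr
  have hne : hermForm q v ≠ 0 := by
    intro hzero
    have heq := (mulVec_eq_smul_iff.1 hv).1
    have hceq := (mulVec_eq_smul_iff.1 (conj_mulVec_eq_smul hF hB hv)).1
    simp only [hconj, cons_val_zero, cons_val_one] at hceq
    rw [hermForm] at hzero
    have hprod : (l - l⁻¹) * v 0 ^ (q + 1) = 0 := by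
      linear_combination B 0 0 * hzero - v 0 ^ q * heq + v 1 * hceq - l⁻¹ * hzero
    have hv0' : v 0 = 0 := by
      simpa [sub_eq_zero, ne_inv_of_sq_ne_one hl0 hl] using hprod
    have hv1' : v 1 = 0 := by simpa [hv0'] using hzero
    exact hv0 (funext fun i => by fin_cases i <;> simp [hv0', hv1'])
  obtain ⟨x, hx⟩ := exists_pow_add_one_eq hF (inv_ne_zero hne)
    (by rw [inv_pow, hermForm_pow hF])
  refine ⟨x • v, by rw [hermForm_smul, hx, inv_mul_cancel₀ hne], ?_⟩
  rw [mulVec_smul, hv, smul_comm]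

lemma tr_eq_of_mulVec_eq_smul (hF : Fintype.card F = q ^ 2) {B : SL(2, F)}
    (hB : B ∈ specialUnitary q F) {l : F} {v : Fin 2 → F} (hv : hermForm q v = 1)
    (hBv : (B : Matrix (Fin 2) (Fin 2) F) *ᵥ v = l • v) : tr B = l + l ^ q := by
  have h := mulVec_eq_smul_iff.1 hBv
  have hc := mulVec_eq_smul_iff.1 (conj_mulVec_eq_smul hF hB hBv)
  simp only [cons_val_zero, cons_val_one] at hc
  rw [hermForm] at hv
  rw [tr_eq]
  linear_combination (l + l ^ q - B 0 0 - B 1 1) * hv + v 0 ^ q * h.1 - v 1 ^ q * h.2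
    - v 1 * hc.1 + v 0 * hc.2

lemma eq_one_of_mulVec_eq (hF : Fintype.card F = q ^ 2) {B : SL(2, F)}
    (hB : B ∈ specialUnitary q F) {v : Fin 2 → F} (hv : hermForm q v = 1)
    (hBv : (B : Matrix (Fin 2) (Fin 2) F) *ᵥ v = v) : B = 1 := by
  rw [← one_smul F v, mulVec_smul, one_smul] at hBv
  have h := mulVec_eq_smul_iff.1 hBv
  have hc := mulVec_eq_smul_iff.1 (conj_mulVec_eq_smul hF hB hBv)
  simp only [cons_val_zero, cons_val_one, one_pow] at hc
  rw [hermForm] at hv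
  ext i j
  fin_cases i <;> fin_cases j
  · change B 0 0 = 1
    linear_combination (1 - B 0 0) * hv + v 0 ^ q * h.1 - v 1 * hc.1
  · change B 0 1 = 0
    linear_combination (-B 0 1) * hv - v 1 ^ q * h.1 + v 0 * hc.1
  · change B 1 0 = 0
    linear_combination (-B 1 0) * hv + v 0 ^ q * h.2 - v 1 * hc.2
  · change B 1 1 = 1
    linear_combination (1 - B 1 1) * hv - v 1 ^ q * h.2 + v 0 * hc.2

lemma pow_add_one_eq_one_iff_of_fixed (hF : Fintype.card F = q ^ 2) {B : SL(2, F)}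
    (hB : B ∈ specialUnitary q F) (hc : B 1 0 ≠ 0) {x : F}
    (hx : B 0 0 * x + B 0 1 = x * (B 1 0 * x + B 1 1)) :
    x ^ (q + 1) = 1 ↔ (B 1 0 * x + B 1 1) ^ q = B 1 0 * x + B 1 1 := by
  rw [hB.1, hB.2] at hx
  rw [add_pow_of_card_eq_sq hF, mul_pow, hB.2, pow_pow_of_card_eq_sq hF]
  have hx0 : x ≠ 0 := by
    rintro rfl
    simp [hc] at hx
  rw [← sub_eq_zero, ← mul_eq_zero_iff_left (pow_ne_zero q hc), iff_comm, ← sub_eq_zero,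
    ← mul_eq_zero_iff_left hx0]
  refine Eq.congr_left ?_
  linear_combination hx

lemma eq_one_of_pow_eq_self [CharP F 2] (hF : Fintype.card F = q ^ 2) {B : SL(2, F)}
    (hB : B ∈ specialUnitary q F) (hc : B 1 0 = 0) (ha : B 0 0 ^ q = B 0 0) : B = 1 := by
  have hb : B 0 1 = 0 := by
    rw [hB.1, hc, zero_pow (one_lt_of_card_eq_sq hF).ne_bot]
  have hd : B 1 1 = B 0 0 := hB.2.trans ha
  have ha1 : B 0 0 = 1 := by
    rw [← CharTwo.sq_inj, one_pow, sq]
    simpa [hb, hd] using mul_sub_mul_eq_one B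
  ext i j
  fin_cases i <;> fin_cases j <;> simp [hc, hb, hd, ha1]

lemma eq_one_of_fixed [CharP F 2] (hF : Fintype.card F = q ^ 2) {B : SL(2, F)}
    (hB : B ∈ specialUnitary q F) (hc : B 1 0 = 0) {x : F} (hx : x ≠ 0)
    (hfix : B 0 0 * x + B 0 1 = x * (B 1 0 * x + B 1 1)) : B = 1 := by
  refine eq_one_of_pow_eq_self hF hB hc (mul_left_cancel₀ hx ?_)
  simpa [hc, hB.1, hB.2, zero_pow (one_lt_of_card_eq_sq hF).ne_bot, mul_comm x, eq_comm] using hfix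

lemma eq_one_of_tr_eq [CharP F 2] (hF : Fintype.card F = q ^ 2) {B : SL(2, F)}
    (hB : B ∈ specialUnitary q F) (hc : B 1 0 = 0) {l : F} (hl0 : l ≠ 0) (hl : l ^ q = l)
    (htr : tr B = l + l⁻¹) : B = 1 := by
  have hmul : B 0 0 * B 1 1 = 1 := by simpa [hc] using mul_sub_mul_eq_one B
  refine eq_one_of_pow_eq_self hF hB hc ?_
  rw [tr_eq, eq_inv_of_mul_eq_one_right hmul,
    add_inv_eq_add_inv_iff (left_ne_zero_of_mul_eq_one hmul) hl0] at htr
  rcases htr with h | h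
  · rw [h, hl]
  · rw [h, inv_pow, hl]

variable [DecidableEq F]

lemma card_hermForm_eq_one (hF : Fintype.card F = q ^ 2) :
    #{v : Fin 2 → F | hermForm q v = 1} = (q + 1) * (q ^ 2 - q) := by
  have hq := one_lt_of_card_eq_sq hF
  have hneg : (-1 : F) ^ q = -1 := by
    simpa [zero_pow (by omega : q ≠ 0)] using sub_pow_of_card_eq_sq hF (0 : F) 1
  have hfiber : ∀ y : F, #{x : F | x ^ (q + 1) = 1 + y ^ (q + 1)}
      = if y ^ (q + 1) = -1 then 1 else q + 1 := by
    intro y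
    split_ifs with hy
    · simp [hy, filter_eq']
    · refine card_pow_add_one_eq hF (fun h => hy (by linear_combination h)) ?_
      rw [add_pow_of_card_eq_sq hF, one_pow, pow_succ, mul_pow, pow_pow_of_card_eq_sq hF, mul_comm]
  have hsum : #{v : Fin 2 → F | hermForm q v = 1}
      = ∑ y : F, #{x : F | x ^ (q + 1) = 1 + y ^ (q + 1)} := by
    rw [card_equiv (finTwoArrowEquiv F)
      (t := ({p | p.1 ^ (q + 1) = 1 + p.2 ^ (q + 1)} : Finset (F × F)))
      (by simp [hermForm, sub_eq_iff_eq_add])]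
    simp only [card_filter, Fintype.sum_prod_type_right]
  have hcompl := card_filter_add_card_filter_not (s := univ) (fun y : F => y ^ (q + 1) = -1)
  rw [card_pow_add_one_eq hF (by simp) hneg, card_univ, hF] at hcompl
  simp only [hsum, hfiber, sum_ite, sum_const, smul_eq_mul, mul_one,
    card_pow_add_one_eq hF (by simp) hneg]
  rw [eq_comm, ← Nat.sub_eq_iff_eq_add' (by omega)] at hcompl
  have hle : q + 1 ≤ q ^ 2 := by nlinarith
  rw [← hcompl, show q ^ 2 - q = q ^ 2 - (q + 1) + 1 by omega]
  ring

lemma card_hermForm_eq_one_mulVec_eq_smul (hF : Fintype.card F = q ^ 2) {B : SL(2, F)}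
    (hB : B ∈ specialUnitary q F) {l : F} (hlq : l ^ (q + 1) = 1) (hl : l ^ 2 ≠ 1) :
    #{v | hermForm q v = 1 ∧ (B : Matrix (Fin 2) (Fin 2) F) *ᵥ v = l • v}
      = if tr B = l + l⁻¹ then q + 1 else 0 := by
  split_ifs with htr
  · obtain ⟨v, hv, hBv⟩ := exists_hermForm_eq_one hF hB hlq hl htr
    have hv0 : v ≠ 0 := by rintro rfl; simp [hermForm] at hv
    rw [← card_pow_eq_one (F := F) (add_one_dvd_card_sub_one hF),
      ← card_image_of_injective _ (smul_left_injective F hv0)]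
    congr 1
    ext w
    simp only [mem_filter, mem_univ, true_and, mem_image]
    constructor
    · rintro ⟨hw, hBw⟩
      have hk := smul_eq_of_mulVec_eq_smul hl hv hBv hBw
      refine ⟨_, ?_, hk⟩
      rwa [← hk, hermForm_smul, hv, mul_one] at hw
    · rintro ⟨k, hk, rfl⟩
      exact ⟨by rw [hermForm_smul, hk, hv, one_mul], by rw [mulVec_smul, hBv, smul_comm]⟩
  · rw [card_eq_zero, filter_eq_empty_iff]
    rintro v - ⟨hv, hBv⟩
    exact htr (pow_eq_inv_of_pow_add_one_eq_one hlq ▸ tr_eq_of_mulVec_eq_smul hF hB hv hBv)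

lemma card_infinite_fixed_eq [CharP F 2] (hF : Fintype.card F = q ^ 2) {B : SL(2, F)}
    (hB : B ∈ specialUnitary q F) (hne : B ≠ 1) :
    #{x : F | x ^ (q + 1) = 1 ∧ B 0 0 * x + B 0 1 = x * (B 1 0 * x + B 1 1)}
      = #{l : F | l ^ (q - 1) = 1 ∧ tr B = l + l⁻¹} := by
  have hq := one_lt_of_card_eq_sq hF
  have hne0 : ∀ l : F, l ^ (q - 1) = 1 → l ≠ 0 := fun l hl => by
    rintro rfl
    simp [show q - 1 ≠ 0 by omega] at hl
  by_cases hc : B 1 0 = 0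
  · rw [filter_false_of_mem fun x _ => ?_, filter_false_of_mem fun l _ => ?_]
    · rintro ⟨hl, htr⟩
      exact hne (eq_one_of_tr_eq hF hB hc (hne0 l hl)
        ((pow_sub_one_eq_one_iff (by omega) (hne0 l hl)).1 hl) htr)
    · rintro ⟨hx, hfix⟩
      refine hne (eq_one_of_fixed hF hB hc ?_ hfix)
      rintro rfl
      simp at hx
  refine card_nbij' (fun x => B 1 0 * x + B 1 1) (fun l => (l - B 1 1) / B 1 0) ?_ ?_ ?_ ?_
  · intro x hx
    simp only [mem_coe, mem_filter, mem_univ, true_and] at hx ⊢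
    have hl0 := denom_ne_zero_of_fixed hx.2
    rw [pow_sub_one_eq_one_iff (by omega) hl0, ← pow_add_one_eq_one_iff_of_fixed hF hB hc hx.2]
    exact ⟨hx.1, (fixed_iff_tr_eq hc hl0).1 hx.2⟩
  · intro l hl
    simp only [mem_coe, mem_filter, mem_univ, true_and] at hl ⊢
    have hl0 := hne0 l hl.1
    obtain ⟨x, rfl⟩ : ∃ x, B 1 0 * x + B 1 1 = l := ⟨(l - B 1 1) / B 1 0, by field_simp; ring⟩
    rw [← fixed_iff_tr_eq hc hl0, pow_sub_one_eq_one_iff (by omega) hl0] at hl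
    rw [add_sub_cancel_right, mul_div_cancel_left₀ _ hc,
      pow_add_one_eq_one_iff_of_fixed hF hB hc hl.2]
    exact hl
  · intro x _
    simp [hc]
  · intro l _
    field_simp
    ring

lemma card_infinite_fixed [CharP F 2] (hF : Fintype.card F = q ^ 2) {B : SL(2, F)}
    (hB : B ∈ specialUnitary q F) :
    #{x : F | x ^ (q + 1) = 1 ∧ B 0 0 * x + B 0 1 = x * (B 1 0 * x + B 1 1)}
      = (if B = 1 then q + 1 else 0) + (if B ≠ 1 ∧ B ^ 2 = 1 then 1 else 0)
        + (if B ≠ 1 ∧ B ^ (q - 1) = 1 then 2 else 0) := by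
  by_cases hne : B = 1
  · simp [hne, card_pow_eq_one (add_one_dvd_card_sub_one hF)]
  have hone : #{l : F | (l ^ (q - 1) = 1 ∧ tr B = l + l⁻¹) ∧ l = 1}
      = if B ^ 2 = 1 then 1 else 0 := by
    simp only [sq_eq_one_iff_tr_eq_zero]
    split_ifs with htr
    · refine card_eq_one.2 ⟨1, ?_⟩
      ext l
      simp +contextual [htr, CharTwo.add_self_eq_zero]
    · rw [card_eq_zero, filter_eq_empty_iff]
      rintro _ - ⟨⟨-, h⟩, rfl⟩
      exact htr (by rw [h, inv_one, CharTwo.add_self_eq_zero])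
  have hrest := card_eigenvalues_eq (sub_one_dvd_card_sub_one hF)
    (odd_sub_one_of_card_eq_sq hF) B
  rw [card_infinite_fixed_eq hF hB hne, ← card_filter_add_card_filter_not (· = 1),
    filter_filter, filter_filter, hone]
  simp only [and_right_comm] at hrest
  rw [hrest]
  simp [hne]

end Unitary

/-! ### Fixed points on the Hermitian curve -/

lemma mulVec_ne_zero {n F : Type*} [Fintype n] [DecidableEq n] [Field F] (M : GL n F) {v : n → F}
    (hv : v ≠ 0) : (M : Matrix n n F) *ᵥ v ≠ 0 :=
  fun h => hv (mulVec_injective_of_isUnit M.isUnit (h.trans (mulVec_zero _).symm))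

open scoped LinearAlgebra.Projectivization

section Projective

variable {F : Type*} [Field F] {q : ℕ}

lemma glAct_mk (M : GL (Fin 3) F) {v : Fin 3 → F} (hv : v ≠ 0) :
    glAct M (.mk F v hv) = .mk F ((M : Matrix (Fin 3) (Fin 3) F) *ᵥ v) (mulVec_ne_zero M hv) :=
  rfl

lemma glAct_one (x : ℙ F (Fin 3 → F)) : glAct 1 x = x := by
  induction x using Projectivization.ind with
  | h v hv => simp [glAct_mk]

lemma glAct_mul (M N : GL (Fin 3) F) (x : ℙ F (Fin 3 → F)) :
    glAct (M * N) x = glAct M (glAct N x) := by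
  induction x using Projectivization.ind with
  | h v hv => simp [glAct_mk]

lemma mk_mem_hermitianPts {v : Fin 3 → F} (hv : v ≠ 0) :
    .mk F v hv ∈ hermitianPts q F ↔ v 1 ^ (q + 1) = v 0 ^ (q + 1) - v 2 ^ (q + 1) := by
  obtain ⟨a, ha⟩ := Projectivization.exists_smul_eq_mk_rep F v hv
  rw [hermitianPts, Set.mem_ofPred_eq, ← ha]
  simp only [Pi.smul_apply, Units.smul_def, smul_eq_mul, mul_pow, ← mul_sub]
  exact mul_right_inj' (pow_ne_zero _ a.ne_zero)

/-- The embedding of `GL(2, F)` into `GL(3, F)` as the upper left block. -/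
def blockHom (F : Type*) [Field F] : GL (Fin 2) F →* GL (Fin 3) F :=
  Units.map
    { toFun := fun M => !![M 0 0, M 0 1, 0; M 1 0, M 1 1, 0; 0, 0, 1]
      map_one' := by simp [one_fin_three]
      map_mul' := fun M N => by simp [mul_apply, Fin.sum_univ_two] }

lemma coe_blockHom (M : GL (Fin 2) F) : (blockHom F M : Matrix (Fin 3) (Fin 3) F) =
    !![M 0 0, M 0 1, 0; M 1 0, M 1 1, 0; 0, 0, 1] := rfl

/-- The point `(x : y : 1)` of the projective plane, for `v = (x, y)`. -/
def affinePoint (v : Fin 2 → F) : ℙ F (Fin 3 → F) :=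
  .mk F ![v 0, v 1, 1] fun h => one_ne_zero (congrFun h 2)

/-- The point `(x : 1 : 0)` at infinity. -/
def infinitePoint (x : F) : ℙ F (Fin 3 → F) :=
  .mk F ![x, 1, 0] fun h => one_ne_zero (congrFun h 1)

lemma affinePoint_injective : Function.Injective (affinePoint (F := F)) := by
  intro v w h
  obtain ⟨k, hk⟩ := (Projectivization.mk_eq_mk_iff' ..).1 h
  obtain rfl : k = 1 := by simpa using congrFun hk 2
  ext i
  fin_cases i
  exacts [by simpa using (congrFun hk 0).symm, by simpa using (congrFun hk 1).symm]

lemma infinitePoint_injective : Function.Injective (infinitePoint (F := F)) := by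
  intro x y h
  obtain ⟨k, hk⟩ := (Projectivization.mk_eq_mk_iff' ..).1 h
  obtain rfl : k = 1 := by simpa using congrFun hk 1
  simpa using (congrFun hk 0).symm

lemma affinePoint_ne_infinitePoint (v : Fin 2 → F) (x : F) : affinePoint v ≠ infinitePoint x := by
  intro h
  obtain ⟨k, hk⟩ := (Projectivization.mk_eq_mk_iff' ..).1 h
  simpa using congrFun hk 2

lemma affinePoint_mem_hermitianPts {v : Fin 2 → F} :
    affinePoint v ∈ hermitianPts q F ↔ hermForm q v = 1 := by
  simp [affinePoint, mk_mem_hermitianPts, hermForm, sub_eq_iff_eq_add, eq_sub_iff_add_eq', eq_comm]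

lemma infinitePoint_mem_hermitianPts {x : F} :
    infinitePoint x ∈ hermitianPts q F ↔ x ^ (q + 1) = 1 := by
  simp [infinitePoint, mk_mem_hermitianPts, eq_comm]

lemma exists_eq_affinePoint_or_infinitePoint {z : ℙ F (Fin 3 → F)} (hz : z ∈ hermitianPts q F) :
    (∃ v, affinePoint v = z) ∨ ∃ x, infinitePoint x = z := by
  induction z using Projectivization.ind with
  | h v hv =>
    rw [mk_mem_hermitianPts] at hz
    by_cases h2 : v 2 = 0
    · have h1 : v 1 ≠ 0 := by
        intro h1
        have h0 : v 0 = 0 := by simpa [h1, h2] using hz.symm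
        exact hv (funext fun i => by fin_cases i <;> simp [h0, h1, h2])
      refine .inr ⟨v 0 / v 1, (Projectivization.mk_eq_mk_iff' ..).2 ⟨(v 1)⁻¹, ?_⟩⟩
      ext i
      fin_cases i <;> simp [h1, h2, div_eq_inv_mul]
    · refine .inl ⟨![v 0 / v 2, v 1 / v 2], (Projectivization.mk_eq_mk_iff' ..).2 ⟨(v 2)⁻¹, ?_⟩⟩
      ext i
      fin_cases i <;> simp [h2, div_eq_inv_mul]

lemma glAct_affinePoint (M : GL (Fin 2) F) (v : Fin 2 → F) :
    glAct (blockHom F M) (affinePoint v) = affinePoint ((M : Matrix (Fin 2) (Fin 2) F) *ᵥ v) := by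
  simp only [affinePoint, glAct_mk, coe_blockHom]
  congr 1
  ext i
  fin_cases i <;> simp [mulVec, dotProduct, Fin.sum_univ_two, Fin.sum_univ_three]

lemma glAct_infinitePoint_eq_self_iff (M : GL (Fin 2) F) (x : F) :
    glAct (blockHom F M) (infinitePoint x) = infinitePoint x
      ↔ M 0 0 * x + M 0 1 = x * (M 1 0 * x + M 1 1) := by
  simp only [infinitePoint, glAct_mk, coe_blockHom, Projectivization.mk_eq_mk_iff']
  simp [funext_iff, Fin.forall_fin_succ, eq_comm, mul_comm x]

lemma ncard_fixed_eq [Fintype F] [DecidableEq F] (M : GL (Fin 2) F) :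
    {z ∈ hermitianPts q F | glAct (blockHom F M) z = z}.ncard =
      #{v | hermForm q v = 1 ∧ (M : Matrix (Fin 2) (Fin 2) F) *ᵥ v = v}
        + #{x : F | x ^ (q + 1) = 1 ∧ M 0 0 * x + M 0 1 = x * (M 1 0 * x + M 1 1)} := by
  have hunion : {z ∈ hermitianPts q F | glAct (blockHom F M) z = z}
      = affinePoint '' {v | hermForm q v = 1 ∧ (M : Matrix (Fin 2) (Fin 2) F) *ᵥ v = v}
        ∪ infinitePoint '' {x | x ^ (q + 1) = 1 ∧ M 0 0 * x + M 0 1 = x * (M 1 0 * x + M 1 1)} := by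
    ext z
    constructor
    · rintro ⟨hz, hfix⟩
      obtain ⟨v, rfl⟩ | ⟨x, rfl⟩ := exists_eq_affinePoint_or_infinitePoint hz
      · rw [glAct_affinePoint, affinePoint_injective.eq_iff] at hfix
        exact .inl ⟨v, ⟨affinePoint_mem_hermitianPts.1 hz, hfix⟩, rfl⟩
      · rw [glAct_infinitePoint_eq_self_iff] at hfix
        exact .inr ⟨x, ⟨infinitePoint_mem_hermitianPts.1 hz, hfix⟩, rfl⟩
    · rintro (⟨v, ⟨hv, hfix⟩, rfl⟩ | ⟨x, ⟨hx, hfix⟩, rfl⟩)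
      · exact ⟨affinePoint_mem_hermitianPts.2 hv, by rw [glAct_affinePoint, hfix]⟩
      · exact ⟨infinitePoint_mem_hermitianPts.2 hx, (glAct_infinitePoint_eq_self_iff M x).2 hfix⟩
  rw [hunion, Set.ncard_union_eq, Set.ncard_image_of_injective _ affinePoint_injective,
    Set.ncard_image_of_injective _ infinitePoint_injective, ← Set.ncard_coe_finset,
    ← Set.ncard_coe_finset]
  · simp
  · rw [Set.disjoint_left]
    rintro _ ⟨v, -, rfl⟩ ⟨x, -, h⟩
    exact affinePoint_ne_infinitePoint v x h.symm

end Projective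

/-! ### Burnside's lemma -/

section Burnside

variable {F G : Type*} [Field F] [Group G] {Φ : G →* GL (Fin 3) F} {O : Set (ℙ F (Fin 3 → F))}

/-- The action of `G` on an invariant set of points through `Φ : G →* GL (Fin 3) F`. -/
@[reducible]
noncomputable def pointAction (hO : ∀ g, ∀ x ∈ O, glAct (Φ g) x ∈ O) : MulAction G O where
  smul g x := ⟨glAct (Φ g) x, hO g x x.2⟩
  one_smul x := Subtype.ext ((congrArg (glAct · x.1) Φ.map_one).trans (glAct_one _))
  mul_smul g k x := Subtype.ext ((congrArg (glAct · x.1) (Φ.map_mul g k)).trans (glAct_mul ..))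

lemma numOrbits_range_eq (hO : ∀ g, ∀ x ∈ O, glAct (Φ g) x ∈ O) :
    numOrbits Φ.range O = Nat.card (@MulAction.orbitRel.Quotient G O _ (pointAction hO)) := by
  let act := pointAction hO
  have hinj : Function.Injective fun ω : MulAction.orbitRel.Quotient G O =>
      ((↑) : O → ℙ F (Fin 3 → F)) '' ω.orbit :=
    (Set.image_injective.2 Subtype.val_injective).comp
      MulAction.orbitRel.Quotient.orbit_injective
  rw [numOrbits, ← Nat.card_range_of_injective hinj]
  have horbit : ∀ x : O, {y | ∃ g ∈ Φ.range, glAct g x = y}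
      = ((↑) : O → ℙ F (Fin 3 → F)) '' MulAction.orbit G x := by
    rintro x
    ext y
    simp only [MonoidHom.mem_range, Set.mem_image, MulAction.mem_orbit_iff, exists_exists_eq_and]
    rfl
  congr! 2
  ext s
  constructor
  · rintro ⟨x, hx, rfl⟩
    exact ⟨Quotient.mk _ ⟨x, hx⟩, (horbit ⟨x, hx⟩).symm⟩
  · rintro ⟨ω, rfl⟩
    obtain ⟨x, rfl⟩ := Quotient.exists_rep ω
    exact ⟨x, x.2, horbit x⟩

lemma sum_ncard_fixed_eq [Finite F] [Fintype G] (hO : ∀ g, ∀ x ∈ O, glAct (Φ g) x ∈ O) :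
    ∑ g, {x ∈ O | glAct (Φ g) x = x}.ncard = numOrbits Φ.range O * Fintype.card G := by
  classical
  have : Finite (ℙ F (Fin 3 → F)) := Quotient.finite _
  have := Fintype.ofFinite O
  let act := pointAction hO
  rw [numOrbits_range_eq hO, Nat.card_eq_fintype_card,
    ← MulAction.sum_card_fixedBy_eq_card_orbits_mul_card_group]
  refine sum_congr rfl fun g _ => ?_
  have himage : {x ∈ O | glAct (Φ g) x = x}
      = ((↑) : O → ℙ F (Fin 3 → F)) '' MulAction.fixedBy O g := by
    ext x
    constructor
    · rintro ⟨hx, hfix⟩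
      exact ⟨⟨x, hx⟩, Subtype.ext hfix, rfl⟩
    · rintro ⟨x, hfix, rfl⟩
      exact ⟨x.2, congrArg Subtype.val hfix⟩
  rw [himage, Set.ncard_image_of_injective _ Subtype.val_injective, ← Nat.card_eq_fintype_card,
    Nat.card_coe_set_eq]

end Burnside

/-! ### Orbits of unitary groups extended by scalars -/

section UnitaryOrbits

variable {F : Type*} [Field F] {q w : ℕ}

lemma glAct_mem_hermitianPts [Fintype F] (hF : Fintype.card F = q ^ 2) {M : GL (Fin 3) F}
    (hM : M ∈ MlSet q F) {x : ℙ F (Fin 3 → F)} (hx : x ∈ hermitianPts q F) :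
    glAct M x ∈ hermitianPts q F := by
  obtain ⟨a, c, τ, hac, hτ, hM⟩ := hM
  induction x using Projectivization.ind with
  | h v hv =>
    rw [mk_mem_hermitianPts] at hx
    rw [glAct_mk, mk_mem_hermitianPts, hM]
    suffices (c * v 0 + τ * a ^ q * v 1) ^ (q + 1)
        = (a * v 0 + τ * c ^ q * v 1) ^ (q + 1) - v 2 ^ (q + 1) by
      simpa [mulVec, dotProduct, Fin.sum_univ_three] using this
    simp only [pow_succ _ q, add_pow_of_card_eq_sq hF, mul_pow, pow_pow_of_card_eq_sq hF]
      at hx hac hτ ⊢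
    linear_combination (a ^ q * a - c ^ q * c) * hx +
      (a ^ q * a - c ^ q * c) * (v 1 ^ q * v 1) * hτ - v 2 ^ q * v 2 * hac

/-- The homomorphism `(g, ε) ↦ ε ρ(g)` into `GL(2, F)` extending a representation `ρ` of `G` by
the scalars `ε` with `ε ^ w = 1`. -/
def scalarExtension {G : Type*} [Group G] (ρ : G →* SL(2, F)) (w : ℕ) :
    G × rootsOfUnity w F →* GL (Fin 2) F :=
  (SpecialLinearGroup.toGL.comp ρ).noncommCoprod
    ((GeneralLinearGroup.scalar (Fin 2)).comp (rootsOfUnity w F).subtype)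
    fun _ _ => (GeneralLinearGroup.scalar_commute _ _).symm

lemma coe_scalarExtension {G : Type*} [Group G] (ρ : G →* SL(2, F)) (g : G)
    (ε : rootsOfUnity w F) : (scalarExtension ρ w (g, ε) : Matrix (Fin 2) (Fin 2) F) =
      ((ε : Fˣ) : F) • (ρ g : Matrix (Fin 2) (Fin 2) F) :=
  (smul_eq_mul_diagonal _ _).symm

lemma blockHom_scalarExtension_mem_MlSet (hw : w ∣ q + 1) {G : Type*} [Group G]
    {ρ : G →* SL(2, F)} (hρ : ∀ g, ρ g ∈ specialUnitary q F) (p : G × rootsOfUnity w F) :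
    blockHom F (scalarExtension ρ w p) ∈ MlSet q F := by
  obtain ⟨g, ε, hε⟩ := p
  obtain ⟨h01, h11⟩ := hρ g
  have hε1 : (ε : F) * ε ^ q = 1 := by
    rw [← pow_succ', ← Units.val_pow_eq_pow_val,
      (mem_rootsOfUnity _ _).1 (rootsOfUnity_le_of_dvd hw hε), Units.val_one]
  have hdet := mul_sub_mul_eq_one (ρ g)
  rw [h01, h11] at hdet
  refine ⟨ε * ρ g 0 0, ε * ρ g 1 0, ε ^ 2, ?_, ?_, ?_⟩
  · simp only [mul_pow, pow_succ']
    linear_combination ρ g 0 0 * ρ g 0 0 ^ q * hε1 - ρ g 1 0 * ρ g 1 0 ^ q * hε1 + hdet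
  · rw [← pow_mul, mul_comm, pow_mul, pow_succ' _ q, hε1, one_pow]
  · have hscale : ∀ x : F, (ε : F) ^ 2 * (ε * x) ^ q = ε * x ^ q := fun x => by
      rw [mul_pow]
      linear_combination ε * x ^ q * hε1
    simp only [coe_blockHom, coe_scalarExtension, hscale, Matrix.smul_apply, smul_eq_mul, h01, h11]

variable [Fintype F] [DecidableEq F]

lemma card_hermForm_eq_one_mulVec_eq (hF : Fintype.card F = q ^ 2) {B : SL(2, F)}
    (hB : B ∈ specialUnitary q F) :
    #{v | hermForm q v = 1 ∧ (B : Matrix (Fin 2) (Fin 2) F) *ᵥ v = v}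
      = if B = 1 then (q + 1) * (q ^ 2 - q) else 0 := by
  split_ifs with h
  · simp [h, card_hermForm_eq_one hF]
  · exact card_eq_zero.2 (filter_eq_empty_iff.2 fun v _ hv =>
      h (eq_one_of_mulVec_eq hF hB hv.1 hv.2))

lemma sum_card_hermForm_eq_one_mulVec_eq_smul (hF : Fintype.card F = q ^ 2) (hw : w ∣ q + 1)
    (hodd : Odd w) {B : SL(2, F)} (hB : B ∈ specialUnitary q F) :
    ∑ l : F with l ^ w = 1,
      #{v | hermForm q v = 1 ∧ (B : Matrix (Fin 2) (Fin 2) F) *ᵥ v = l • v}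
      = (if B = 1 then (q + 1) * (q ^ 2 - q) else 0)
        + (q + 1) * (if B ≠ 1 ∧ B ^ w = 1 then 2 else 0) := by
  have hwF := hw.trans (add_one_dvd_card_sub_one hF)
  have hne : ∀ l ∈ ({l : F | l ^ w = 1} : Finset F).erase 1,
      #{v | hermForm q v = 1 ∧ (B : Matrix (Fin 2) (Fin 2) F) *ᵥ v = l • v}
        = if tr B = l + l⁻¹ then q + 1 else 0 := by
    intro l hl
    obtain ⟨hl1, hlw⟩ : l ≠ 1 ∧ l ^ w = 1 := by simpa using hl
    have hlq := orderOf_dvd_iff_pow_eq_one.1 ((orderOf_dvd_of_pow_eq_one hlw).trans hw)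
    exact card_hermForm_eq_one_mulVec_eq_smul hF hB hlq
      (sq_ne_one_of_odd_pow_eq_one hodd hlw hl1)
  have hone : (1 : F) ∈ ({l : F | l ^ w = 1} : Finset F) := by simp
  rw [← add_sum_erase _ _ hone, sum_congr rfl hne]
  simp only [one_smul, card_hermForm_eq_one_mulVec_eq hF hB]
  rw [← sum_filter, sum_const, smul_eq_mul, mul_comm _ (q + 1), ← card_eigenvalues_eq hwF hodd B]
  congr 3
  ext l
  simp only [mem_filter, mem_erase, mem_univ, true_and]
  tauto

lemma sum_rootsOfUnity_inv_eq [NeZero w] [Fintype (rootsOfUnity w F)] (f : F → ℕ) :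
    ∑ ε : rootsOfUnity w F, f ((ε : Fˣ) : F)⁻¹ = ∑ l : F with l ^ w = 1, f l := by
  refine sum_bij (fun ε _ => ((ε : Fˣ) : F)⁻¹) (fun ε _ => ?_) (fun ε _ δ _ h => ?_)
    (fun l hl => ?_) fun _ _ => rfl
  · have hε := (mem_rootsOfUnity' _ _).1 ε.2
    simp [hε]
  · exact rootsOfUnity.coe_injective (inv_injective h)
  · refine ⟨(rootsOfUnity.mkOfPowEq l (mem_filter.1 hl).2)⁻¹, mem_univ _, ?_⟩
    rw [Subgroup.coe_inv, Units.val_inv_eq_inv_val, inv_inv, rootsOfUnity.coe_mkOfPowEq]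

lemma ncard_fixed_scalarExtension_eq {G : Type*} [Group G] (ρ : G →* SL(2, F)) (g : G)
    (ε : rootsOfUnity w F) :
    {z ∈ hermitianPts q F | glAct (blockHom F (scalarExtension ρ w (g, ε))) z = z}.ncard =
      #{v | hermForm q v = 1 ∧ (ρ g : Matrix (Fin 2) (Fin 2) F) *ᵥ v = ((ε : Fˣ) : F)⁻¹ • v}
        + #{x | x ^ (q + 1) = 1 ∧ ρ g 0 0 * x + ρ g 0 1 = x * (ρ g 1 0 * x + ρ g 1 1)} := by
  have hε := (ε : Fˣ).ne_zero
  rw [ncard_fixed_eq]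
  congr 3 with p
  · rw [coe_scalarExtension, smul_mulVec, eq_inv_smul_iff₀ hε]
  · simp only [coe_scalarExtension, Matrix.smul_apply, smul_eq_mul]
    rw [← mul_right_inj' hε (b := ρ g 0 0 * p + ρ g 0 1)]
    ring_nf

lemma sum_ncard_fixed_scalarExtension_eq [CharP F 2] (hF : Fintype.card F = q ^ 2)
    (hw : w ∣ q + 1) [Fintype (rootsOfUnity w F)]
    {G : Type*} [Group G] {ρ : G →* SL(2, F)} {g : G} (hρ : ρ g ∈ specialUnitary q F) :
    ∑ ε : rootsOfUnity w F,
        {z ∈ hermitianPts q F | glAct (blockHom F (scalarExtension ρ w (g, ε))) z = z}.ncard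
      = (if ρ g = 1 then (q + 1) * (q ^ 2 - q) else 0)
        + (q + 1) * (if ρ g ≠ 1 ∧ ρ g ^ w = 1 then 2 else 0)
        + w * ((if ρ g = 1 then q + 1 else 0) + (if ρ g ≠ 1 ∧ ρ g ^ 2 = 1 then 1 else 0)
          + (if ρ g ≠ 1 ∧ ρ g ^ (q - 1) = 1 then 2 else 0)) := by
  have hwF := hw.trans (add_one_dvd_card_sub_one hF)
  have hodd : Odd w := .of_dvd_nat (even_of_card_eq_sq hF).add_one hw
  have : NeZero w := ⟨hodd.pos.ne'⟩
  simp only [ncard_fixed_scalarExtension_eq, sum_add_distrib]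
  rw [sum_rootsOfUnity_inv_eq fun l =>
      #{v | hermForm q v = 1 ∧ (ρ g : Matrix (Fin 2) (Fin 2) F) *ᵥ v = l • v},
    sum_card_hermForm_eq_one_mulVec_eq_smul hF hw hodd hρ, card_infinite_fixed hF hρ,
    sum_const, smul_eq_mul, card_univ, ← Nat.card_eq_fintype_card, card_rootsOfUnity_eq hwF]

omit [DecidableEq F] in
lemma numOrbits_scalarExtension_mul [CharP F 2] (hF : Fintype.card F = q ^ 2)
    (hw : w ∣ q + 1) {G : Type*} [Group G] [Fintype G]
    [DecidableEq G] {ρ : G →* SL(2, F)} (hinj : Function.Injective ρ)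
    (hρ : ∀ g, ρ g ∈ specialUnitary q F) :
    numOrbits ((blockHom F).comp (scalarExtension ρ w)).range (hermitianPts q F)
        * (Fintype.card G * w) =
      (q + 1) * (q ^ 2 - q) + (q + 1) * (2 * #{g : G | g ≠ 1 ∧ g ^ w = 1})
        + w * ((q + 1) + #{g : G | g ≠ 1 ∧ g ^ 2 = 1}
          + 2 * #{g : G | g ≠ 1 ∧ g ^ (q - 1) = 1}) := by
  classical
  have := Fintype.ofFinite (rootsOfUnity w F)
  have hcard : Fintype.card (G × rootsOfUnity w F) = Fintype.card G * w := by
    rw [Fintype.card_prod, ← Nat.card_eq_fintype_card (α := rootsOfUnity w F),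
      card_rootsOfUnity_eq (hw.trans (add_one_dvd_card_sub_one hF))]
  have hO : ∀ p, ∀ x ∈ hermitianPts q F,
      glAct ((blockHom F).comp (scalarExtension ρ w) p) x ∈ hermitianPts q F :=
    fun p _ => glAct_mem_hermitianPts hF (blockHom_scalarExtension_mem_MlSet hw hρ p)
  rw [← hcard, ← sum_ncard_fixed_eq hO, Fintype.sum_prod_type]
  simp only [MonoidHom.comp_apply,
    sum_ncard_fixed_scalarExtension_eq hF hw (hρ _), ← map_pow,
    map_eq_one_iff ρ hinj, ne_eq, sum_add_distrib, ← mul_sum, ← sum_filter, sum_const, smul_eq_mul]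
  simp [filter_eq', mul_comm]

end UnitaryOrbits

/-! ### Subgroups of `M_ℓ` -/

section HermitianSubgroup

/-- Transvections are involutions in characteristic 2, and they generate `SL(2, K)`. -/
lemma map_eq_one_of_forall_pow_eq_one {K M : Type*} [Field K] [CharP K 2] [CommMonoid M]
    {χ : SL(2, K) →* M} {n : ℕ} (hn : Odd n) (hχ : ∀ A, χ A ^ n = 1) (A : SL(2, K)) : χ A = 1 := by
  induction A using SL2.transvection_induction with
  | htransvec i j hij c =>
    have hsq : χ (SpecialLinearGroup.transvection hij c) ^ 2 = 1 := by
      rw [← map_pow, sq, ← SpecialLinearGroup.transvection_add, CharTwo.add_self_eq_zero,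
        SpecialLinearGroup.transvection_coeff_zero, map_one]
    simpa [Nat.coprime_two_left.2 hn] using pow_gcd_eq_one.2 ⟨hsq, hχ _⟩
  | hmul A B hA hB => rw [map_mul, hA, hB, one_mul]

variable {F : Type*} [Field F] {q : ℕ}

lemma det_of_pow_sub_pow_eq_one {a c : F} (hac : a ^ (q + 1) - c ^ (q + 1) = 1) (τ : F) :
    !![a, τ * c ^ q, 0; c, τ * a ^ q, 0; 0, 0, 1].det = τ := by
  have : a * (τ * a ^ q) - τ * c ^ q * c = τ := by linear_combination τ * hac
  simpa [det_fin_three] using this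

lemma det_pow_eq_one_of_mem_MlSet {M : GL (Fin 3) F} (hM : M ∈ MlSet q F) :
    GeneralLinearGroup.det M ^ (q + 1) = 1 := by
  obtain ⟨a, c, τ, hac, hτ, hM⟩ := hM
  rw [Units.ext_iff, Units.val_pow_eq_pow_val, GeneralLinearGroup.val_det_apply, hM,
    det_of_pow_sub_pow_eq_one hac, hτ, Units.val_one]

lemma exists_blockHom_toGL_eq {M : GL (Fin 3) F} (hM : M ∈ MlSet q F)
    (hdet : GeneralLinearGroup.det M = 1) :
    ∃ B ∈ specialUnitary q F, blockHom F (SpecialLinearGroup.toGL B) = M := by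
  obtain ⟨a, c, τ, hac, -, hM⟩ := hM
  obtain rfl : τ = 1 := by
    rwa [Units.ext_iff, GeneralLinearGroup.val_det_apply, hM, det_of_pow_sub_pow_eq_one hac] at hdet
  have hB : !![a, c ^ q; c, a ^ q].det = 1 := by
    rw [det_fin_two_of]
    linear_combination hac
  refine ⟨⟨_, hB⟩, ⟨rfl, rfl⟩, Units.ext ?_⟩
  rw [coe_blockHom, hM]
  simp only [one_mul]
  rfl

lemma blockHom_injective : Function.Injective (blockHom F) := by
  intro M N h
  ext i j
  have hij (k l : Fin 3) : (blockHom F M).val k l = (blockHom F N).val k l := by rw [h]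
  simp only [coe_blockHom] at hij
  fin_cases i <;> fin_cases j
  exacts [hij 0 0, hij 0 1, hij 1 0, hij 1 1]

lemma exists_specialUnitary_hom {S : Subgroup (GL (Fin 3) F)} (hS : (S : Set _) ⊆ MlSet q F)
    (hdet : ∀ M ∈ S, GeneralLinearGroup.det M = 1) {G : Type*} [Group G] (e : S ≃* G) :
    ∃ ρ : G →* SL(2, F), Function.Injective ρ ∧ (∀ g, ρ g ∈ specialUnitary q F) ∧
      (((blockHom F).comp SpecialLinearGroup.toGL).comp ρ).range = S := by
  let ι := (blockHom F).comp (SpecialLinearGroup.toGL (n := Fin 2) (R := F))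
  have hι : Function.Injective ι := blockHom_injective.comp SpecialLinearGroup.toGL_injective
  choose B hB hBM using fun M : S => exists_blockHom_toGL_eq (hS M.2) (hdet M M.2)
  let ρ : S →* SL(2, F) := MonoidHom.mk' B fun M N => hι <| by
    rw [map_mul]
    exact (hBM _).trans (congrArg₂ (· * ·) (hBM M) (hBM N)).symm
  have hρ : ι.comp ρ = S.subtype := MonoidHom.ext hBM
  refine ⟨ρ.comp e.symm, ?_, fun g => hB _, ?_⟩
  · have : Function.Injective (ι ∘ ρ) := by
      rw [← MonoidHom.coe_comp, hρ]
      exact S.subtype_injective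
    exact this.of_comp.comp e.symm.injective
  · change ((ι.comp ρ).comp e.symm.toMonoidHom).range = S
    rw [MonoidHom.range_comp, MonoidHom.range_eq_top.2 e.symm.surjective, ← MonoidHom.range_eq_map,
      hρ, S.range_subtype]

/-- The embedding `ε ↦ diag(ε, ε, 1)` of the scalars of `GL(2, F)` into `GL(3, F)`. -/
def blockScalar (F : Type*) [Field F] : Fˣ →* GL (Fin 3) F :=
  (blockHom F).comp (GeneralLinearGroup.scalar (Fin 2))

lemma blockScalar_injective : Function.Injective (blockScalar F) :=
  blockHom_injective.comp fun a b h => Units.ext <| by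
    simpa using congrArg (fun M : GL (Fin 2) F => M 0 0) h

lemma ZSet_eq_map : ZSet q F = (rootsOfUnity (q + 1) F).map (blockScalar F) := by
  have hcoe (ε : Fˣ) : (blockScalar F ε : Matrix (Fin 3) (Fin 3) F)
      = diagonal ![(ε : F), (ε : F), 1] := by
    ext i j
    fin_cases i <;> fin_cases j <;> simp [blockScalar, coe_blockHom]
  ext M
  constructor
  · rintro ⟨ε, hε, hM⟩
    refine ⟨Units.ofPowEqOne ε (q + 1) hε q.succ_ne_zero, ?_, ?_⟩
    · exact Units.pow_ofPowEqOne hε q.succ_ne_zero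
    · exact Units.ext ((hcoe _).trans hM.symm)
  · rintro ⟨ε, hε, rfl⟩
    exact ⟨ε, (mem_rootsOfUnity' _ _).1 hε, hcoe ε⟩

lemma range_blockHom_comp_scalarExtension {G : Type*} [Group G] (ρ : G →* SL(2, F)) (w : ℕ) :
    ((blockHom F).comp (scalarExtension ρ w)).range =
      (((blockHom F).comp SpecialLinearGroup.toGL).comp ρ).range
        ⊔ (rootsOfUnity w F).map (blockScalar F) := by
  have hrange : (scalarExtension ρ w).range = (SpecialLinearGroup.toGL.comp ρ).range
      ⊔ ((GeneralLinearGroup.scalar (Fin 2)).comp (rootsOfUnity w F).subtype).range :=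
    MonoidHom.noncommCoprod_range _ _ _
  rw [MonoidHom.range_comp, hrange, Subgroup.map_sup, ← MonoidHom.range_comp,
    ← MonoidHom.range_comp, ← MonoidHom.comp_assoc, ← MonoidHom.comp_assoc, ← blockScalar,
    MonoidHom.range_comp (blockScalar F), Subgroup.range_subtype]

lemma eq_rootsOfUnity_natCard [Finite F] (T : Subgroup Fˣ) :
    T = rootsOfUnity (Nat.card T) F := by
  have := Fintype.ofFinite F
  have hcard : Nat.card T ∣ Fintype.card F - 1 := by
    rw [← Nat.card_eq_fintype_card, ← Nat.card_units]
    exact T.card_subgroup_dvd_card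
  refine Subgroup.eq_of_le_of_card_ge (fun t ht => (mem_rootsOfUnity _ _).2 ?_)
    (card_rootsOfUnity_eq hcard).le
  exact congrArg Subtype.val (pow_card_eq_one' (x := (⟨t, ht⟩ : T)))

lemma inter_ZSet_eq_map [Fintype F] (hF : Fintype.card F = q ^ 2) {w : ℕ}
    {L : Subgroup (GL (Fin 3) F)} (hcard : Nat.card (L ∩ ZSet q F : Set (GL (Fin 3) F)) = w) :
    w ∣ q + 1 ∧ (L : Set _) ∩ ZSet q F = (rootsOfUnity w F).map (blockScalar F) := by
  let T := L.comap (blockScalar F) ⊓ rootsOfUnity (q + 1) F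
  have hT : (L : Set _) ∩ ZSet q F = T.map (blockScalar F) := by
    rw [ZSet_eq_map, Subgroup.coe_map, Subgroup.coe_map, Subgroup.coe_inf, Subgroup.coe_comap,
      Set.image_preimage_inter]
  have hTw : Nat.card T = w := by
    rw [← hcard, hT]
    exact (Subgroup.card_map_of_injective blockScalar_injective).symm
  refine ⟨?_, by rw [hT, eq_rootsOfUnity_natCard T, hTw]⟩
  rw [← hTw, ← card_rootsOfUnity_eq (add_one_dvd_card_sub_one hF)]
  exact Subgroup.card_dvd_of_le inf_le_right

lemma exists_eq_range_scalarExtension [Fintype F] [CharP F 2] (hF : Fintype.card F = q ^ 2)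
    {w : ℕ} {L S : Subgroup (GL (Fin 3) F)} (hL : (L : Set _) ⊆ MlSet q F)
    (hcard : Nat.card (L ∩ ZSet q F : Set (GL (Fin 3) F)) = w)
    {K : Type*} [Field K] [CharP K 2] (e : S ≃* SL(2, K))
    (hgen : L = Subgroup.closure (S ∪ (L ∩ ZSet q F))) :
    ∃ ρ : SL(2, K) →* SL(2, F), Function.Injective ρ ∧ (∀ g, ρ g ∈ specialUnitary q F) ∧
      L = ((blockHom F).comp (scalarExtension ρ w)).range := by
  have hSL : S ≤ L := hgen ▸ fun _ hM => Subgroup.subset_closure (.inl hM)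
  have hS : (S : Set _) ⊆ MlSet q F := fun M hM => hL (hSL hM)
  let χ : SL(2, K) →* Fˣ := (GeneralLinearGroup.det.comp S.subtype).comp e.symm.toMonoidHom
  have hdet : ∀ M ∈ S, GeneralLinearGroup.det M = 1 := fun M hM => by
    have := map_eq_one_of_forall_pow_eq_one (χ := χ) (even_of_card_eq_sq hF).add_one
      (fun A => det_pow_eq_one_of_mem_MlSet (hS (e.symm A).2)) (e ⟨M, hM⟩)
    simpa [χ] using this
  obtain ⟨ρ, hinj, hρ, hrange⟩ := exists_specialUnitary_hom hS hdet e
  refine ⟨ρ, hinj, hρ, ?_⟩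
  rw [range_blockHom_comp_scalarExtension, hrange, Subgroup.sup_eq_closure,
    ← (inter_ZSet_eq_map hF hcard).2, ← hgen]

end HermitianSubgroup

/-! ### The orbit count -/

section OrbitCount

lemma nonempty_ringHom_of_card_eq_pow {K F : Type*} [Field K] [Fintype K] [Field F] [Fintype F]
    {n : ℕ} (hcard : Fintype.card F = Fintype.card K ^ n) : Nonempty (K →+* F) := by
  obtain ⟨p, hchar, a, hp, hK⟩ := FiniteField.card' K
  have := Fact.mk hp
  rw [hK, ← pow_mul] at hcard
  have := charP_of_card_eq_prime_pow hcard
  let _ : Algebra (ZMod p) K := ZMod.algebra K p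
  let _ : Algebra (ZMod p) F := ZMod.algebra F p
  have hKrank := Module.card_eq_pow_finrank (K := ZMod p) (V := K)
  have hFrank := Module.card_eq_pow_finrank (K := ZMod p) (V := F)
  rw [hK, ZMod.card] at hKrank
  rw [hcard, ZMod.card] at hFrank
  have hdvd : Module.finrank (ZMod p) K ∣ Module.finrank (ZMod p) F := by
    rw [← Nat.pow_right_injective hp.two_le hKrank, ← Nat.pow_right_injective hp.two_le hFrank]
    exact dvd_mul_right _ _
  exact (FiniteField.nonempty_algHom_of_finrank_dvd hdvd).map AlgHom.toRingHom

lemma coprime_sub_one_add_one {q : ℕ} (hq : Even q) (hpos : 0 < q) : (q - 1).Coprime (q + 1) := by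
  obtain ⟨n, rfl⟩ := Nat.exists_eq_succ_of_ne_zero hpos.ne'
  have hn : Odd n := Nat.not_even_iff_odd.1 (Nat.even_add_one.1 hq)
  simpa [add_assoc] using Nat.coprime_two_right.2 hn

lemma sq_sub_one_dvd_pow_sub_one {m : ℕ} (hm : Even m) (k : ℕ) : k ^ 2 - 1 ∣ k ^ m - 1 := by
  obtain ⟨j, rfl⟩ := hm
  simpa [← two_mul, pow_mul] using Nat.sub_dvd_pow_sub_pow (k ^ 2) 1 j

lemma coprime_pow_sub_one_add_one {k m : ℕ} (hq : Even (k ^ m)) (hpos : 0 < k ^ m) (hm : Odd m) :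
    (k ^ m - 1).Coprime (k + 1) := by
  refine (coprime_sub_one_add_one hq hpos).coprime_dvd_right ?_
  simpa using hm.nat_add_dvd_pow_add_pow k 1

variable {K F : Type*} [Field K] [Fintype K] [CharP K 2] [Field F] [Fintype F] [Algebra K F]
  {q k m w : ℕ} {L S : Subgroup (GL (Fin 3) F)} (hk : Fintype.card K = k)
  (hF : Fintype.card F = q ^ 2) (hL : (L : Set (GL (Fin 3) F)) ⊆ MlSet q F)
  (hcard : Nat.card (L ∩ ZSet q F : Set (GL (Fin 3) F)) = w) (e : S ≃* SL(2, K))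
  (hgen : L = Subgroup.closure (S ∪ (L ∩ ZSet q F)))

include hk hF hL hcard e hgen

lemma numOrbits_mul_card :
    numOrbits L (hermitianPts q F) * (k * (k - 1) * (k + 1) * w) =
      (q + 1) * (q ^ 2 - q)
        + (q + 1) * ((w.gcd (k - 1) - 1) * (k * (k + 1)) + (w.gcd (k + 1) - 1) * (k * (k - 1)))
        + w * ((q + 1) + (k ^ 2 - 1)
          + (((q - 1).gcd (k - 1) - 1) * (k * (k + 1))
            + ((q - 1).gcd (k + 1) - 1) * (k * (k - 1)))) := by
  classical
  have : CharP F 2 := charP_of_injective_algebraMap (algebraMap K F).injective 2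
  obtain ⟨hw, -⟩ := inter_ZSet_eq_map hF hcard
  obtain ⟨ρ, hinj, hρ, hLρ⟩ := exists_eq_range_scalarExtension hF hL hcard e hgen
  have hcount := numOrbits_scalarExtension_mul hF hw hinj hρ
  rwa [← hLρ, card_specialLinearGroup_two, card_ne_one_sq_eq_one,
    two_mul_card_torsion (F := F) (hw.trans (add_one_dvd_card_sub_one hF))
      (.of_dvd_nat (even_of_card_eq_sq hF).add_one hw),
    two_mul_card_torsion (F := F) (sub_one_dvd_card_sub_one hF) (odd_sub_one_of_card_eq_sq hF),
    hk] at hcount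

lemma numOrbits_mul_card_of_eq_pow (hqk : q = k ^ m) :
    numOrbits L (hermitianPts q F) * (k * (k - 1) * (k + 1) * w) =
      (q + 1) * (q ^ 2 - q) + (q + 1) * ((w.gcd (k + 1) - 1) * (k * (k - 1)))
        + w * ((q + 1) + (k ^ 2 - 1)
          + ((k - 1 - 1) * (k * (k + 1)) + ((q - 1).gcd (k + 1) - 1) * (k * (k - 1)))) := by
  have : CharP F 2 := charP_of_injective_algebraMap (algebraMap K F).injective 2
  have hcop := coprime_sub_one_add_one (even_of_card_eq_sq hF) (one_lt_of_card_eq_sq hF).pos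
  have hdvd : k - 1 ∣ q - 1 := by simpa [hqk] using Nat.sub_dvd_pow_sub_pow k 1 m
  have hgcd : w.gcd (k - 1) = 1 :=
    (hcop.coprime_dvd_left hdvd).symm.coprime_dvd_left (inter_ZSet_eq_map hF hcard).1
  simpa [hgcd, Nat.gcd_eq_right hdvd] using numOrbits_mul_card hk hF hL hcard e hgen

lemma numOrbits_eq_of_odd (hqk : q = k ^ m) (hm : Odd m) :
    (numOrbits L (hermitianPts q F) : ℚ) = 1 + ((q : ℚ) - k) / (k * ((k : ℚ) ^ 2 - 1))
      + ((q : ℚ) + 1) * (w.gcd (k + 1) : ℚ) / (((k : ℚ) + 1) * (w : ℚ))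
      + (((q : ℚ) + 1) / (w : ℚ)) * ((q : ℚ) * ((q : ℚ) - 1) - k * ((k : ℚ) - 1))
        / (k * ((k : ℚ) - 1) * ((k : ℚ) + 1)) := by
  have : CharP F 2 := charP_of_injective_algebraMap (algebraMap K F).injective 2
  have hq1 := one_lt_of_card_eq_sq hF
  have hk1 : 1 < k := hk ▸ Fintype.one_lt_card
  have hw0 : w ≠ 0 := ne_zero_of_dvd_ne_zero q.succ_ne_zero (inter_ZSet_eq_map hF hcard).1
  have hgcd : (q - 1).gcd (k + 1) = 1 := by
    subst hqk
    exact coprime_pow_sub_one_add_one (even_of_card_eq_sq hF) hq1.pos hm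
  have hg : 1 ≤ w.gcd (k + 1) := Nat.gcd_pos_of_pos_right _ k.succ_pos
  have hcount := congrArg (Nat.cast : ℕ → ℚ)
    (numOrbits_mul_card_of_eq_pow hk hF hL hcard e hgen hqk)
  rw [hgcd] at hcount
  push_cast [Nat.cast_sub (Nat.le_self_pow two_ne_zero q), Nat.cast_sub hg, Nat.cast_sub hk1.le,
    Nat.cast_sub (Nat.one_le_pow 2 k hk1.pos), Nat.cast_sub (Nat.le_sub_one_of_lt hk1)] at hcount
  have hkQ : (1 : ℚ) < k := by exact_mod_cast hk1
  have hk0 : (k : ℚ) ≠ 0 := by positivity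
  have hkm : (k : ℚ) - 1 ≠ 0 := sub_ne_zero.2 hkQ.ne'
  have hksq : (k : ℚ) ^ 2 - 1 ≠ 0 := sub_ne_zero.2 (one_lt_pow₀ hkQ two_ne_zero).ne'
  field_simp
  linear_combination ((k : ℚ) - 1) * (k + 1) * hcount

lemma numOrbits_eq_of_even (hqk : q = k ^ m) (hm : Even m) :
    (numOrbits L (hermitianPts q F) : ℚ) =
      2 + ((q : ℚ) - (k : ℚ) ^ 2) / (k * ((k : ℚ) ^ 2 - 1))
        + ((q : ℚ) / k) * (((q : ℚ) - 1) / ((k : ℚ) ^ 2 - 1)) * (((q : ℚ) + 1) / (w : ℚ)) := by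
  have : CharP F 2 := charP_of_injective_algebraMap (algebraMap K F).injective 2
  have hq1 := one_lt_of_card_eq_sq hF
  have hk1 : 1 < k := hk ▸ Fintype.one_lt_card
  obtain ⟨hw, -⟩ := inter_ZSet_eq_map hF hcard
  have hw0 : w ≠ 0 := ne_zero_of_dvd_ne_zero q.succ_ne_zero hw
  have hdvd : k + 1 ∣ q - 1 := by
    refine .trans ?_ (hqk ▸ sq_sub_one_dvd_pow_sub_one hm k)
    exact ⟨k - 1, by simpa using Nat.sq_sub_sq k 1⟩
  have hgcd : w.gcd (k + 1) = 1 :=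
    ((coprime_sub_one_add_one (even_of_card_eq_sq hF) hq1.pos).coprime_dvd_left
      hdvd).symm.coprime_dvd_left hw
  have hcount := congrArg (Nat.cast : ℕ → ℚ)
    (numOrbits_mul_card_of_eq_pow hk hF hL hcard e hgen hqk)
  rw [hgcd, Nat.gcd_eq_right hdvd] at hcount
  push_cast [Nat.cast_sub (Nat.le_self_pow two_ne_zero q), Nat.cast_sub hk1.le,
    Nat.cast_sub (Nat.one_le_pow 2 k hk1.pos), Nat.cast_sub (Nat.le_sub_one_of_lt hk1)] at hcount
  have hkQ : (1 : ℚ) < k := by exact_mod_cast hk1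
  have hk0 : (k : ℚ) ≠ 0 := by positivity
  have hksq : (k : ℚ) ^ 2 - 1 ≠ 0 := sub_ne_zero.2 (one_lt_pow₀ hkQ two_ne_zero).ne'
  field_simp
  linear_combination hcount

end OrbitCount

end HermitianOrbits

theorem stmt7_general {K F : Type*} [Field K] [Fintype K] [CharP K 2] [Field F] [Fintype F]
    {q k m w : ℕ} (hk : Fintype.card K = k) (hF : Fintype.card F = q ^ 2) (hqk : q = k ^ m)
    {L S : Subgroup (GL (Fin 3) F)} (hL : (L : Set (GL (Fin 3) F)) ⊆ MlSet q F)
    (hcard : Nat.card (L ∩ ZSet q F : Set (GL (Fin 3) F)) = w)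
    (e : S ≃* SpecialLinearGroup (Fin 2) K)
    (hgen : L = Subgroup.closure (S ∪ (L ∩ ZSet q F))) :
    (Odd m →
      (numOrbits L (hermitianPts q F) : ℚ) = 1 + ((q : ℚ) - k) / (k * ((k : ℚ) ^ 2 - 1))
        + ((q : ℚ) + 1) * (w.gcd (k + 1) : ℚ) / (((k : ℚ) + 1) * (w : ℚ))
        + (((q : ℚ) + 1) / (w : ℚ)) * ((q : ℚ) * ((q : ℚ) - 1) - k * ((k : ℚ) - 1))
          / (k * ((k : ℚ) - 1) * ((k : ℚ) + 1))) ∧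
    (Even m →
      (numOrbits L (hermitianPts q F) : ℚ) =
        2 + ((q : ℚ) - (k : ℚ) ^ 2) / (k * ((k : ℚ) ^ 2 - 1))
          + ((q : ℚ) / k) * (((q : ℚ) - 1) / ((k : ℚ) ^ 2 - 1)) * (((q : ℚ) + 1) / (w : ℚ))) := by
  have hcardF : Fintype.card F = Fintype.card K ^ (m * 2) := by rw [hF, hqk, hk, pow_mul]
  obtain ⟨φ⟩ := HermitianOrbits.nonempty_ringHom_of_card_eq_pow hcardF
  let _ : Algebra K F := φ.toAlgebra
  exact ⟨HermitianOrbits.numOrbits_eq_of_odd hk hF hL hcard e hgen hqk,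
    HermitianOrbits.numOrbits_eq_of_even hk hF hL hcard e hgen hqk⟩

theorem stmt7 (h q f w : ℕ) (hh : 1 ≤ h) (hq : q = 2 ^ h)
    (F : Type*) [Field F] [Fintype F] (hF : Fintype.card F = q ^ 2)
    (hf : f ∣ h) (hf1 : 1 < f) (hw : w ∣ q + 1)
    (L : Subgroup (GL (Fin 3) F)) (hLMl : (L : Set (GL (Fin 3) F)) ⊆ MlSet q F)
    (hZcard : Nat.card ((L : Set (GL (Fin 3) F)) ∩ ZSet q F : Set (GL (Fin 3) F)) = w)
    (S : Subgroup (GL (Fin 3) F))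
    (hSiso : Nonempty (↥S ≃* Matrix.SpecialLinearGroup (Fin 2) (GaloisField 2 f)))
    (hgen : L = Subgroup.closure
      ((S : Set (GL (Fin 3) F)) ∪ ((L : Set (GL (Fin 3) F)) ∩ ZSet q F)))
    (htriv : (S : Set (GL (Fin 3) F)) ∩ ((L : Set (GL (Fin 3) F)) ∩ ZSet q F) ⊆ {1}) :
    (Odd (h / f) →
      (numOrbits L (hermitianPts q F) : ℚ)
        = 1 + ((q : ℚ) - 2 ^ f) / (2 ^ f * ((2 : ℚ) ^ (2 * f) - 1))
          + ((q : ℚ) + 1) * (Nat.gcd w (2 ^ f + 1) : ℚ) / (((2 : ℚ) ^ f + 1) * (w : ℚ))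
          + (((q : ℚ) + 1) / (w : ℚ))
            * ((q : ℚ) * ((q : ℚ) - 1) - 2 ^ f * ((2 : ℚ) ^ f - 1))
            / (2 ^ f * ((2 : ℚ) ^ f - 1) * ((2 : ℚ) ^ f + 1))) ∧
    (Even (h / f) →
      (numOrbits L (hermitianPts q F) : ℚ)
        = 2 + ((q : ℚ) - 2 ^ (2 * f)) / (2 ^ f * ((2 : ℚ) ^ (2 * f) - 1))
          + ((q : ℚ) / 2 ^ f) * (((q : ℚ) - 1) / ((2 : ℚ) ^ (2 * f) - 1))
            * (((q : ℚ) + 1) / (w : ℚ))) := by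
  have := Fintype.ofFinite (GaloisField 2 f)
  have hk : Fintype.card (GaloisField 2 f) = 2 ^ f := by
    rw [← Nat.card_eq_fintype_card, GaloisField.card 2 f (by omega)]
  have hqk : q = (2 ^ f) ^ (h / f) := by rw [hq, ← pow_mul, Nat.mul_div_cancel' hf]
  simpa [pow_mul'] using stmt7_general hk hF hqk hLMl hZcard hSiso.some hgen
end
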